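/- arXiv:2306.15216 — 2 statements merged into one kernel-verified Lean document; each statement's English description precedes it below -/
import Mathlib

section
/- Let r ≥ 2 be an integer. Define functions g_1, …, g_{2r} on the interval (0,1) by g_i(x) = ∫₀^∞ I₀(xt) I₀(t)^{i−1} K₀(t)^{2r−i} dt for 1 ≤ i ≤ r, and g_i(x) = ∫₀^∞ K₀(xt) I₀(t)^{i−r−1} K₀(t)^{3r−i} dt for r < i ≤ 2r, and let ω_{2r}(x) be the Wronskian determinant det( (d/dx)^{l−1} g_i(x) )_{1 ≤ l, i ≤ 2r}. Then lim_{x → 0⁺} x^r · ω_{2r}(x) = (−1)^{r(r+1)/2} · (det M_r)². -/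
/-!
Let `f_a = I₀^a K₀^(2r-1-a)` for `0 ≤ a < r`. The first `r` functions `g_i` are the transforms
`∫ I₀(xt) f_a(t) dt`, the last `r` are `∫ K₀(xt) f_a(t) dt`. Since `φ = I₀` and `φ = K₀` both satisfy
`φ'' + φ'/z = φ`, the operator `Δ = D² + D/x` acts on such a transform by inserting `t²` under the
integral. The operators `1, D, Δ, DΔ, Δ², …` differ from `1, D, D², …` by a unitriangular change of
rows with coefficients depending on `x` only, so (`w_eq`)

  `ω_{2r}(x) = det (P_l g_i)`, where `P_l` inserts `t^l` and uses `φ` for even `l`, `φ'` for odd `l`.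

Put one factor `x` in each of the `r` columns coming from `K₀`. As `x → 0⁺`, dominated convergence
gives entrywise limits:
* `∫ I₀(xt) t^(2k) f_a → ∫ t^(2k) f_a` and `∫ I₀'(xt) t^(2k+1) f_a → 0` (`tendsto_PP_I`);
* `x ∫ K₀(xt) t^(2k) f_a → 0`, because `K₀` is only logarithmically singular at `0`
  (`tendsto_PP_K_even`);
* `x ∫ K₀'(xt) t^(2k+1) f_a → -∫ t^(2k) f_a`, because `z K₀'(z) → -1` (`tendsto_PP_K_odd`).

After sorting the rows by parity the limit matrix is block diagonal with blocks `M_rᵀ` and `-M_rᵀ`.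
The sorting permutation has sign `(-1)^(r(r-1)/2)` (`det_shuffle`) and the second block contributes
a further `(-1)^r`, which gives the stated value (`det_limit`).

The majorants rest on `K₀(z) ≤ C z^(-1/(2k)) exp(-z)` for every `k ≥ 1` and `|I₀(z)| ≤ exp z`, which
make `f_a` of size `O(t^(-1/4) exp(-t))`, so that `exp(ct)` with `c < 1` can be absorbed.
-/

open MeasureTheory Real

/-- The modified Bessel function `I₀`. -/
noncomputable def I0 (t : ℝ) : ℝ := (1 / π) * ∫ θ in (0:ℝ)..π, Real.exp (t * Real.cos θ)

/-- The modified Bessel function `K₀`. -/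
noncomputable def K0 (t : ℝ) : ℝ := ∫ u in Set.Ioi (0:ℝ), Real.exp (-t * Real.cosh u)

/-- The Bessel moment `IKM_k(a,b) = ∫₀^∞ I₀(t)^a K₀(t)^(k-a) t^b dt`. -/
noncomputable def IKM (k a b : ℕ) : ℝ :=
  ∫ t in Set.Ioi (0:ℝ), I0 t ^ a * K0 t ^ (k - a) * t ^ b
/-- The matrix `M_r` with `(i,j)`-entry `IKM_{2r-1}(i-1, 2j-2)` for `1 ≤ i,j ≤ r`. -/
noncomputable def Mmat (r : ℕ) : Matrix (Fin r) (Fin r) ℝ :=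
  Matrix.of fun i j => IKM (2 * r - 1) (i : ℕ) (2 * (j : ℕ))

/-- The functions `g_1, …, g_{2r}` (indexed by `Fin (2r)`, so index `i : Fin (2r)`
corresponds to `g_{i+1}`):
`g_i(x) = ∫₀^∞ I₀(xt) I₀(t)^(i-1) K₀(t)^(2r-i) dt` for `1 ≤ i ≤ r` and
`g_i(x) = ∫₀^∞ K₀(xt) I₀(t)^(i-r-1) K₀(t)^(3r-i) dt` for `r < i ≤ 2r`. -/
noncomputable def g (r : ℕ) (i : Fin (2 * r)) (x : ℝ) : ℝ :=
  if (i : ℕ) < r then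
    ∫ t in Set.Ioi (0:ℝ), I0 (x * t) * I0 t ^ (i : ℕ) * K0 t ^ (2 * r - 1 - (i : ℕ))
  else
    ∫ t in Set.Ioi (0:ℝ), K0 (x * t) * I0 t ^ ((i : ℕ) - r) * K0 t ^ (3 * r - 1 - (i : ℕ))

/-- The Wronskian `ω_{2r}(x) = det((d/dx)^(l-1) g_i(x))_{1 ≤ l,i ≤ 2r}`. -/
noncomputable def w (r : ℕ) (x : ℝ) : ℝ :=
  Matrix.det (Matrix.of fun l i : Fin (2 * r) => iteratedDeriv (l : ℕ) (g r i) x)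
open Filter Topology Set

/-! ### The Bessel functions and their differential equation -/

/-- The integral `∫₀^∞ cosh(u)^n exp(-z cosh u) du`, which is `(-1)^n K₀⁽ⁿ⁾(z)` for `z > 0`. -/
noncomputable def Kc (n : ℕ) (z : ℝ) : ℝ :=
  ∫ u in Ioi (0:ℝ), Real.cosh u ^ n * Real.exp (-z * Real.cosh u)

/-- The integral `(1/π) ∫₀^π cos(θ)^n exp(z cos θ) dθ`, which is `I₀⁽ⁿ⁾(z)`. -/
noncomputable def Ic (n : ℕ) (z : ℝ) : ℝ :=
  (1 / π) * ∫ θ in (0:ℝ)..π, Real.cos θ ^ n * Real.exp (z * Real.cos θ)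

lemma K0_eq : K0 = Kc 0 := by
  funext z; simp [K0, Kc]

lemma I0_eq : I0 = Ic 0 := by
  funext z; simp [I0, Ic]

lemma one_add_pow_le_cosh (k : ℕ) (hk : 1 ≤ k) (u : ℝ) :
    1 + u ^ (2 * k) / (2 * k).factorial ≤ Real.cosh u := by
  have h := sum_le_hasSum {0, k} (fun i _ => by rw [pow_mul]; positivity) (Real.hasSum_cosh u)
  rw [Finset.sum_pair (by lia)] at h
  simpa using h

lemma le_cosh (u : ℝ) : u ≤ Real.cosh u := by
  have h := one_add_pow_le_cosh 1 le_rfl u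
  norm_num [Nat.factorial] at h
  nlinarith [sq_nonneg (u - 1)]

lemma pow_mul_exp_neg_le (n : ℕ) {z : ℝ} (hz : 0 < z) {y : ℝ} (hy : 0 ≤ y) :
    y ^ n * Real.exp (-z * y) ≤ n.factorial * (2 / z) ^ n * Real.exp (-(z / 2) * y) := by
  have h := Real.pow_div_factorial_le_exp (z / 2 * y) (by positivity) n
  have hf : (0:ℝ) < n.factorial := by positivity
  rw [div_le_iff₀ hf, mul_pow] at h
  have e : Real.exp (-z * y) = Real.exp (-(z / 2) * y) * Real.exp (-(z / 2) * y) := by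
    rw [← Real.exp_add]; ring_nf
  have e2 : Real.exp (z / 2 * y) * Real.exp (-(z / 2) * y) = 1 := by
    rw [← Real.exp_add]; simp
  have e3 : (2 / z) ^ n * (z / 2) ^ n = 1 := by
    rw [← mul_pow]; field_simp; simp
  set E := Real.exp (-(z / 2) * y) with hE
  have hE0 : 0 < E := Real.exp_pos _
  calc y ^ n * Real.exp (-z * y) = (2 / z) ^ n * ((z / 2) ^ n * y ^ n) * (E * E) := by
        rw [e]; linear_combination (-(y ^ n * E * E)) * e3
    _ ≤ (2 / z) ^ n * (Real.exp (z / 2 * y) * n.factorial) * (E * E) := by gcongr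
    _ = n.factorial * (2 / z) ^ n * E := by
        linear_combination (n.factorial * (2 / z) ^ n * E) * e2

lemma exp_neg_cosh_le {z : ℝ} (hz : 0 ≤ z) (u : ℝ) :
    Real.exp (-z * Real.cosh u) ≤ Real.exp (-z * u) := by
  apply Real.exp_le_exp.2
  nlinarith [le_cosh u]

lemma cosh_pow_mul_exp_le (n : ℕ) {z : ℝ} (hz : 0 < z) (u : ℝ) :
    Real.cosh u ^ n * Real.exp (-z * Real.cosh u)
      ≤ n.factorial * (2 / z) ^ n * Real.exp (-(z / 2) * u) := by
  refine (pow_mul_exp_neg_le n hz (Real.cosh_pos u).le).trans ?_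
  gcongr ?_ * ?_
  exact exp_neg_cosh_le (by positivity) u

lemma Kc_integrable (n : ℕ) {z : ℝ} (hz : 0 < z) :
    IntegrableOn (fun u => Real.cosh u ^ n * Real.exp (-z * Real.cosh u)) (Ioi 0) := by
  refine Integrable.mono' ((exp_neg_integrableOn_Ioi 0 (b := z / 2) (by positivity)).const_mul
    (n.factorial * (2 / z) ^ n)) (by fun_prop) (Eventually.of_forall fun u => ?_)
  have := Real.cosh_pos u
  rw [Real.norm_of_nonneg (by positivity)]
  exact cosh_pow_mul_exp_le n hz u

lemma Kc_hasDerivAt (n : ℕ) {z : ℝ} (hz : 0 < z) : HasDerivAt (Kc n) (-Kc (n + 1) z) z := by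
  have h := (hasDerivAt_integral_of_dominated_loc_of_deriv_le (μ := volume.restrict (Ioi 0))
    (F := fun z u => Real.cosh u ^ n * Real.exp (-z * Real.cosh u))
    (F' := fun z u => -(Real.cosh u ^ (n + 1) * Real.exp (-z * Real.cosh u)))
    (bound := fun u => Real.cosh u ^ (n + 1) * Real.exp (-(z / 2) * Real.cosh u))
    (x₀ := z) (s := Ioi (z / 2)) (Ioi_mem_nhds (by linarith))
    (Eventually.of_forall fun x => by fun_prop) (Kc_integrable n hz) (by fun_prop)
    (Eventually.of_forall fun u x hx => ?_) (Kc_integrable (n + 1) (by positivity))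
    (Eventually.of_forall fun u x hx => ?_)).2
  · rw [integral_neg] at h
    exact h
  · have := Real.cosh_pos u
    have hx' : z / 2 < x := hx
    rw [norm_neg, Real.norm_of_nonneg (by positivity)]
    gcongr
  · have := (((hasDerivAt_id x).neg.mul_const (Real.cosh u)).exp).const_mul (Real.cosh u ^ n)
    refine this.congr_deriv ?_
    simp; ring

lemma Ic_hasDerivAt (n : ℕ) (z : ℝ) : HasDerivAt (Ic n) (Ic (n + 1) z) z := by
  refine HasDerivAt.const_mul _ ?_
  refine (intervalIntegral.hasDerivAt_integral_of_dominated_loc_of_deriv_le (μ := volume)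
    (F := fun z θ => Real.cos θ ^ n * Real.exp (z * Real.cos θ))
    (F' := fun z θ => Real.cos θ ^ (n + 1) * Real.exp (z * Real.cos θ))
    (bound := fun θ => Real.exp (|z| + 1))
    (x₀ := z) (s := Metric.ball z 1) (Metric.ball_mem_nhds _ one_pos)
    (Eventually.of_forall fun x => by fun_prop) (Continuous.intervalIntegrable (by fun_prop) _ _)
    (by fun_prop)
    (Eventually.of_forall fun u _ x hx => ?_) (by simp)
    (Eventually.of_forall fun u _ x hx => ?_)).2
  · rw [norm_mul, norm_pow, Real.norm_of_nonneg (Real.exp_pos _).le]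
    have h1 : ‖Real.cos u‖ ≤ 1 := Real.abs_cos_le_one u
    have h2 : |x| ≤ |z| + 1 := by
      have : |x - z| < 1 := hx
      have := abs_sub_abs_le_abs_sub x z
      linarith
    have h3 : x * Real.cos u ≤ |z| + 1 := by
      calc x * Real.cos u ≤ |x * Real.cos u| := le_abs_self _
        _ = |x| * |Real.cos u| := abs_mul _ _
        _ ≤ |x| * 1 := by gcongr; exact h1
        _ ≤ _ := by linarith
    calc ‖Real.cos u‖ ^ (n + 1) * Real.exp (x * Real.cos u)
        ≤ 1 ^ (n + 1) * Real.exp (|z| + 1) := by gcongr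
      _ = _ := by simp
  · have := (((hasDerivAt_id x).mul_const (Real.cos u)).exp).const_mul (Real.cos u ^ n)
    refine this.congr_deriv ?_
    simp; ring

/-- Bessel's equation for `K₀`: integrate the derivative of `sinh u · exp(-z cosh u)`. -/
lemma Kc_two {z : ℝ} (hz : 0 < z) : Kc 2 z = Kc 0 z + Kc 1 z / z := by
  have hd : ∀ u ∈ Ici (0:ℝ), HasDerivAt (fun u => Real.sinh u * Real.exp (-z * Real.cosh u))
      (Real.cosh u ^ 1 * Real.exp (-z * Real.cosh u)
        - z * (Real.cosh u ^ 2 * Real.exp (-z * Real.cosh u)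
          - Real.cosh u ^ 0 * Real.exp (-z * Real.cosh u))) u := by
    intro u _
    have := (Real.hasDerivAt_sinh u).mul (((Real.hasDerivAt_cosh u).const_mul (-z)).exp)
    refine this.congr_deriv ?_
    have := Real.cosh_sq u
    linear_combination z * Real.exp (-z * Real.cosh u) * this
  have i1 := Kc_integrable 1 hz
  have i2 := Kc_integrable 2 hz
  have i0 := Kc_integrable 0 hz
  have ht : Tendsto (fun u => Real.sinh u * Real.exp (-z * Real.cosh u)) atTop (𝓝 0) := by
    have hb : Tendsto (fun u => (1:ℕ).factorial * (2 / z) ^ 1 * Real.exp (-(z / 2) * u))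
        atTop (𝓝 0) := by
      have := (Real.tendsto_exp_atBot.comp
        (tendsto_id.const_mul_atTop_of_neg (show -(z / 2) < 0 by linarith))).const_mul
          ((1:ℕ).factorial * (2 / z) ^ 1)
      simpa using! this
    refine squeeze_zero' ?_ (Eventually.of_forall fun u => ?_) hb
    · filter_upwards [eventually_ge_atTop 0] with u hu
      have := Real.sinh_nonneg_iff.2 hu
      positivity
    · refine le_trans ?_ (cosh_pow_mul_exp_le 1 hz u)
      have := Real.sinh_lt_cosh u
      rw [pow_one]
      gcongr
  have i3 : IntegrableOn (fun u => z * (Real.cosh u ^ 2 * Real.exp (-z * Real.cosh u)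
      - Real.cosh u ^ 0 * Real.exp (-z * Real.cosh u))) (Ioi 0) := (i2.sub i0).const_mul z
  have h := integral_Ioi_of_hasDerivAt_of_tendsto' hd (i1.sub i3) ht
  rw [integral_sub i1 i3, integral_const_mul, integral_sub i2 i0] at h
  simp only [Real.sinh_zero, zero_mul, sub_zero] at h
  change Kc 1 z - z * (Kc 2 z - Kc 0 z) = 0 at h
  field_simp
  linarith

/-- Bessel's equation for `I₀`: integrate the derivative of `sin θ · exp(z cos θ)`. -/
lemma Ic_two {z : ℝ} (hz : 0 < z) : Ic 2 z = Ic 0 z - Ic 1 z / z := by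
  have hd : ∀ u ∈ uIcc 0 π, HasDerivAt (fun u => Real.sin u * Real.exp (z * Real.cos u))
      (Real.cos u ^ 1 * Real.exp (z * Real.cos u)
        - z * (Real.cos u ^ 0 * Real.exp (z * Real.cos u)
          - Real.cos u ^ 2 * Real.exp (z * Real.cos u))) u := by
    intro u _
    have := (Real.hasDerivAt_sin u).mul (((Real.hasDerivAt_cos u).const_mul z).exp)
    refine this.congr_deriv ?_
    have := Real.sin_sq_add_cos_sq u
    linear_combination -z * Real.exp (z * Real.cos u) * this
  have i (n : ℕ) : IntervalIntegrable (fun u => Real.cos u ^ n * Real.exp (z * Real.cos u))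
      volume 0 π := Continuous.intervalIntegrable (by fun_prop) _ _
  have h := intervalIntegral.integral_eq_sub_of_hasDerivAt hd
    ((i 1).sub (((i 0).sub (i 2)).const_mul z))
  rw [intervalIntegral.integral_sub (i 1) (((i 0).sub (i 2)).const_mul z),
    intervalIntegral.integral_const_mul, intervalIntegral.integral_sub (i 0) (i 2)] at h
  simp only [Real.sin_pi, Real.sin_zero, zero_mul, sub_zero] at h
  simp only [Ic]
  generalize (∫ u in (0:ℝ)..π, Real.cos u ^ 0 * Real.exp (z * Real.cos u)) = a0 at h ⊢
  generalize (∫ u in (0:ℝ)..π, Real.cos u ^ 1 * Real.exp (z * Real.cos u)) = a1 at h ⊢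
  generalize (∫ u in (0:ℝ)..π, Real.cos u ^ 2 * Real.exp (z * Real.cos u)) = a2 at h ⊢
  field_simp
  linarith

/-! ### Size of the Bessel functions -/

lemma Kc_nonneg (n : ℕ) (z : ℝ) : 0 ≤ Kc n z :=
  integral_nonneg fun u => by have := Real.cosh_pos u; positivity

/-- `K₀` decays like `exp(-z)` and its singularity at `0` is weaker than any negative power. -/
lemma K0_bound (k : ℕ) (hk : 1 ≤ k) :
    ∃ C : ℝ, 0 ≤ C ∧ ∀ z : ℝ, 0 < z →
      Kc 0 z ≤ C * z ^ (-(1 / (2 * k : ℝ))) * Real.exp (-z) := by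
  set N : ℝ := ((2 * k).factorial : ℝ) with hN
  have hN0 : 0 < N := by positivity
  have hk0 : (0:ℝ) < 2 * k := by positivity
  refine ⟨N⁻¹ ^ (-(1 / (2 * k : ℝ))) * Real.Gamma (1 / (2 * k : ℝ) + 1), ?_, fun z hz => ?_⟩
  · have := Real.Gamma_pos_of_pos (show (0:ℝ) < 1 / (2 * k : ℝ) + 1 by positivity)
    positivity
  have hzN : 0 < z / N := by positivity
  have hint : IntegrableOn (fun u : ℝ => Real.exp (-(z / N) * u ^ (2 * k : ℝ))) (Ioi 0) := by
    simpa using integrableOn_rpow_mul_exp_neg_mul_rpow (s := 0) (by norm_num) hk0 hzN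
  calc Kc 0 z ≤ ∫ u in Ioi (0:ℝ), Real.exp (-z) * Real.exp (-(z / N) * u ^ (2 * k : ℝ)) := by
        refine setIntegral_mono_on (Kc_integrable 0 hz) (hint.const_mul _) measurableSet_Ioi
          fun u hu => ?_
        rw [pow_zero, one_mul, ← Real.exp_add]
        apply Real.exp_le_exp.2
        have h := one_add_pow_le_cosh k hk u
        have e : u ^ (2 * k : ℝ) = u ^ (2 * k) := by
          rw [← Real.rpow_natCast]; push_cast; rfl
        rw [e]
        have := mul_le_mul_of_nonneg_left h hz.le
        have e2 : z * (1 + u ^ (2 * k) / N) = z + z / N * u ^ (2 * k) := by ring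
        linarith
    _ = _ := by
        rw [integral_const_mul, integral_exp_neg_mul_rpow hk0 hzN, div_eq_mul_inv z N,
          Real.mul_rpow hz.le (by positivity), neg_div]
        ring

/-- `z K₁(z) = 1 + O(z)` for small `z`, and at most linear growth globally:
compare `cosh` with `sinh`, whose integral is elementary. -/
lemma K1_bounds {z : ℝ} (hz : 0 < z) :
    Real.exp (-z) ≤ z * Kc 1 z ∧ z * Kc 1 z ≤ Real.exp (-z) + z := by
  have hd : ∀ u ∈ Ici (0:ℝ), HasDerivAt (fun u => -Real.exp (-z * Real.cosh u))
      (z * (Real.sinh u * Real.exp (-z * Real.cosh u))) u := by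
    intro u _
    refine (((Real.hasDerivAt_cosh u).const_mul (-z)).exp).neg.congr_deriv ?_
    ring
  have i1 := Kc_integrable 1 hz
  have is : IntegrableOn (fun u => Real.sinh u * Real.exp (-z * Real.cosh u)) (Ioi 0) := by
    refine Integrable.mono' i1 (by fun_prop) ?_
    filter_upwards [ae_restrict_mem measurableSet_Ioi] with u hu
    have h0 : 0 ≤ Real.sinh u := Real.sinh_nonneg_iff.2 (le_of_lt hu)
    rw [Real.norm_of_nonneg (by positivity), pow_one]
    have := Real.sinh_lt_cosh u
    gcongr
  have ht : Tendsto (fun u => -Real.exp (-z * Real.cosh u)) atTop (𝓝 (-0)) := by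
    refine Tendsto.neg ?_
    have hb : Tendsto (fun u => Real.exp (-z * u)) atTop (𝓝 0) :=
      Real.tendsto_exp_atBot.comp (tendsto_id.const_mul_atTop_of_neg (by linarith))
    exact squeeze_zero (fun u => (Real.exp_pos _).le) (exp_neg_cosh_le hz.le) hb
  have h := integral_Ioi_of_hasDerivAt_of_tendsto' hd (is.const_mul z) ht
  rw [integral_const_mul] at h
  simp only [Real.cosh_zero, mul_one, neg_zero, zero_sub, neg_neg] at h
  have hdiff : Kc 1 z - ∫ u in Ioi (0:ℝ), Real.sinh u * Real.exp (-z * Real.cosh u)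
      = ∫ u in Ioi (0:ℝ), Real.exp (-u) * Real.exp (-z * Real.cosh u) := by
    rw [Kc, ← integral_sub i1 is]
    congr 1
    funext u
    rw [← Real.cosh_sub_sinh]; ring
  have h0 : 0 ≤ ∫ u in Ioi (0:ℝ), Real.exp (-u) * Real.exp (-z * Real.cosh u) :=
    integral_nonneg fun u => by positivity
  have h1 : ∫ u in Ioi (0:ℝ), Real.exp (-u) * Real.exp (-z * Real.cosh u) ≤ 1 := by
    rw [← integral_exp_neg_Ioi_zero]
    have ie : IntegrableOn (fun u : ℝ => Real.exp (-u)) (Ioi 0) := by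
      simpa using exp_neg_integrableOn_Ioi 0 one_pos
    have hle : ∀ u : ℝ, Real.exp (-u) * Real.exp (-z * Real.cosh u) ≤ Real.exp (-u) := by
      intro u
      have : Real.exp (-z * Real.cosh u) ≤ 1 := by
        apply Real.exp_le_one_iff.2
        have := Real.cosh_pos u
        nlinarith
      nlinarith [Real.exp_pos (-u)]
    refine integral_mono (ie.mono' (by fun_prop) (Eventually.of_forall fun u => ?_)) ie hle
    rw [Real.norm_of_nonneg (by positivity)]
    exact hle u
  constructor <;> nlinarith

lemma abs_Ic_le (n : ℕ) {z : ℝ} (hz : 0 ≤ z) : |Ic n z| ≤ Real.exp z := by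
  have h := intervalIntegral.norm_integral_le_of_norm_le_const (a := 0) (b := π)
    (f := fun θ => Real.cos θ ^ n * Real.exp (z * Real.cos θ)) (C := Real.exp z) fun θ _ => by
      rw [norm_mul, norm_pow, Real.norm_of_nonneg (Real.exp_pos _).le]
      have h1 : ‖Real.cos θ‖ ≤ 1 := Real.abs_cos_le_one θ
      have h2 : z * Real.cos θ ≤ z := by nlinarith [Real.cos_le_one θ]
      calc _ ≤ 1 ^ n * Real.exp z := by gcongr
        _ = _ := by simp
  rw [sub_zero, abs_of_pos Real.pi_pos, Real.norm_eq_abs] at h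
  rw [Ic, abs_mul, abs_of_pos (by positivity), one_div, inv_mul_le_iff₀ Real.pi_pos]
  linarith

lemma Ic_zero_zero : Ic 0 0 = 1 := by
  simp [Ic]

lemma Ic_one_zero : Ic 1 0 = 0 := by
  simp [Ic]

lemma continuous_Ic (n : ℕ) : Continuous (Ic n) :=
  continuous_iff_continuousAt.2 fun z => (Ic_hasDerivAt n z).continuousAt

lemma continuousOn_Kc (n : ℕ) : ContinuousOn (Kc n) (Ioi 0) :=
  fun _ hz => (Kc_hasDerivAt n hz).continuousAt.continuousWithinAt

/-! ### Bessel transforms of a weight -/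

/-- A weight on `(0,∞)`: continuous, with a mild singularity at `0` and decay `exp(-t)`. -/
structure IsWeight (f : ℝ → ℝ) : Prop where
  cont : ContinuousOn f (Ioi 0)
  bd : ∃ A : ℝ, 0 ≤ A ∧ ∀ t, 0 < t → |f t| ≤ A * t ^ (-(1 / 4) : ℝ) * Real.exp (-t)

/-- `φ` solves Bessel's equation `φ'' + φ'/z = φ` on `(0,∞)`, with derivative `φ₁`, and both
functions satisfy growth bounds shared by `I₀` and `K₀`. -/
structure IsBessel (φ φ₁ : ℝ → ℝ) : Prop where
  d0 : ∀ z, 0 < z → HasDerivAt φ (φ₁ z) z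
  d1 : ∀ z, 0 < z → HasDerivAt φ₁ (φ z - φ₁ z / z) z
  bd : ∃ C : ℝ, 0 ≤ C ∧ ∀ z, 0 < z →
    |φ z| ≤ C * (1 + z ^ (-(1 / 4) : ℝ)) * Real.exp z ∧ z * |φ₁ z| ≤ C * (1 + z) * Real.exp z

lemma isBessel_I : IsBessel (Ic 0) (Ic 1) where
  d0 z _ := Ic_hasDerivAt 0 z
  d1 z hz := by rw [← Ic_two hz]; exact Ic_hasDerivAt 1 z
  bd := by
    refine ⟨1, zero_le_one, fun z hz => ?_⟩
    have h0 := abs_Ic_le 0 hz.le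
    have h1 := abs_Ic_le 1 hz.le
    have hp : 0 < z ^ (-(1 / 4) : ℝ) := by positivity
    have he := Real.exp_pos z
    constructor <;> nlinarith

lemma isBessel_K : IsBessel (Kc 0) (fun z => -Kc 1 z) where
  d0 z hz := Kc_hasDerivAt 0 hz
  d1 z hz := by
    refine (Kc_hasDerivAt 1 hz).neg.congr_deriv ?_
    rw [neg_neg, Kc_two hz]; ring
  bd := by
    obtain ⟨C, hC, h⟩ := K0_bound 2 (by norm_num)
    refine ⟨C + 1, by positivity, fun z hz => ?_⟩
    have hp : 0 < z ^ (-(1 / 4) : ℝ) := by positivity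
    have he := Real.add_one_le_exp z
    have h1 : Real.exp (-z) ≤ 1 := Real.exp_le_one_iff.2 (by linarith)
    rw [abs_neg, abs_of_nonneg (Kc_nonneg _ _), abs_of_nonneg (Kc_nonneg _ _)]
    constructor
    · have := h z hz
      rw [show (-(1 / (2 * ((2:ℕ):ℝ)))) = -(1 / 4) by norm_num] at this
      set p := z ^ (-(1 / 4) : ℝ)
      calc Kc 0 z ≤ C * p * Real.exp (-z) := this
        _ ≤ (C + 1) * (1 + p) * Real.exp z := by gcongr <;> linarith
    · have := (K1_bounds hz).2
      calc z * Kc 1 z ≤ 1 * (1 + z) * 1 := by linarith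
        _ ≤ _ := by gcongr <;> linarith

/-- `I₀^a K₀^p` with `a < p` is a weight: `I₀ K₀` loses the exponential factors, and one
uncompensated `K₀` remains. -/
lemma isWeight (a p : ℕ) (h : a < p) : IsWeight (fun t => I0 t ^ a * K0 t ^ p) where
  cont := by
    rw [I0_eq, K0_eq]
    exact ((continuous_Ic 0).continuousOn.pow a).mul ((continuousOn_Kc 0).pow p)
  bd := by
    obtain ⟨C, hC, hK⟩ := K0_bound (2 * p) (by lia)
    refine ⟨C ^ p, by positivity, fun t ht => ?_⟩
    rw [I0_eq, K0_eq, abs_mul, abs_pow, abs_pow, abs_of_nonneg (Kc_nonneg 0 t)]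
    have hp : (0:ℝ) < p := by exact_mod_cast (by lia : 0 < p)
    have e : (t ^ (-(1 / (2 * ((2 * p : ℕ) : ℝ))))) ^ p = t ^ (-(1 / 4) : ℝ) := by
      rw [← Real.rpow_natCast, ← Real.rpow_mul ht.le]
      congr 1; push_cast; field_simp; norm_num
    calc |Ic 0 t| ^ a * Kc 0 t ^ p
        ≤ Real.exp t ^ a * (C * t ^ (-(1 / (2 * ((2 * p : ℕ) : ℝ)))) * Real.exp (-t)) ^ p := by
          gcongr
          · exact pow_nonneg (Kc_nonneg 0 t) p
          · exact abs_Ic_le 0 ht.le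
          · exact Kc_nonneg 0 t
          · exact hK t ht
      _ = C ^ p * t ^ (-(1 / 4) : ℝ) * (Real.exp (a * t) * Real.exp (p * (-t))) := by
          rw [mul_pow, mul_pow, e, ← Real.exp_nat_mul, ← Real.exp_nat_mul]; ring
      _ ≤ C ^ p * t ^ (-(1 / 4) : ℝ) * Real.exp (-t) := by
          rw [← Real.exp_add]
          gcongr
          have : (a:ℝ) + 1 ≤ p := by exact_mod_cast h
          nlinarith

/-- The common majorant, up to constants, of the kernels integrated against a weight. -/
noncomputable def maj (m : ℕ) (c t : ℝ) : ℝ :=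
  (1 + t) ^ m * (1 + t ^ (-(1 / 4) : ℝ)) * Real.exp (c * t)

lemma maj_nonneg (m : ℕ) (c : ℝ) {t : ℝ} (ht : 0 < t) : 0 ≤ maj m c t := by
  unfold maj; positivity

lemma maj_integrable (m : ℕ) {c : ℝ} (hc : c < 1) :
    IntegrableOn (fun t => maj m c t * (t ^ (-(1 / 4) : ℝ) * Real.exp (-t))) (Ioi 0) := by
  obtain ⟨k, hk0, rfl⟩ : ∃ k : ℝ, 0 < k ∧ c = 1 - 2 * k := ⟨(1 - c) / 2, by linarith, by ring⟩
  have i1 := integrableOn_rpow_mul_exp_neg_mul_rpow (s := -(1 / 4)) (p := 1) (b := k)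
    (by norm_num) one_pos hk0
  have i2 := integrableOn_rpow_mul_exp_neg_mul_rpow (s := -(1 / 2)) (p := 1) (b := k)
    (by norm_num) one_pos hk0
  refine Integrable.mono' ((i1.add i2).const_mul
    (m.factorial * (2 / (2 * k)) ^ m * Real.exp k)) ?_ ?_
  · unfold maj
    exact Measurable.aestronglyMeasurable (by fun_prop)
  filter_upwards [ae_restrict_mem measurableSet_Ioi] with t ht
  have ht : 0 < t := ht
  have h := pow_mul_exp_neg_le m (z := 2 * k) (by positivity) (y := 1 + t) (by positivity)
  have hn := maj_nonneg m (1 - 2 * k) ht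
  rw [Real.norm_of_nonneg (by positivity)]
  have e1 : t ^ (-(1 / 2) : ℝ) = t ^ (-(1 / 4) : ℝ) * t ^ (-(1 / 4) : ℝ) := by
    rw [← Real.rpow_add ht]; norm_num
  simp only [Pi.add_apply, Real.rpow_one]
  rw [e1, maj]
  set p := t ^ (-(1 / 4) : ℝ) with hp
  have hp0 : 0 < p := by positivity
  have e2 : Real.exp ((1 - 2 * k) * t) * Real.exp (-t)
      = Real.exp (2 * k) * Real.exp (-(2 * k) * (1 + t)) := by
    rw [← Real.exp_add, ← Real.exp_add]; ring_nf
  have e3 : Real.exp (2 * k) * Real.exp (-(2 * k / 2) * (1 + t))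
      = Real.exp k * Real.exp (-k * t) := by
    rw [← Real.exp_add, ← Real.exp_add]; ring_nf
  calc (1 + t) ^ m * (1 + p) * Real.exp ((1 - 2 * k) * t) * (p * Real.exp (-t))
      = (p + p * p) * Real.exp (2 * k) * ((1 + t) ^ m * Real.exp (-(2 * k) * (1 + t))) := by
        linear_combination ((1 + t) ^ m * (1 + p) * p) * e2
    _ ≤ (p + p * p) * Real.exp (2 * k) * (m.factorial * (2 / (2 * k)) ^ m
          * Real.exp (-(2 * k / 2) * (1 + t))) := by gcongr
    _ = _ := by
        linear_combination ((p + p * p) * (m.factorial * (2 / (2 * k)) ^ m)) * e3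

lemma IsWeight.abs_mul_le {f : ℝ → ℝ} (hf : IsWeight f) : ∃ A : ℝ, 0 ≤ A ∧
    ∀ (m : ℕ) (c B y t : ℝ), 0 ≤ B → 0 < t → |y| ≤ B * maj m c t →
      |y * f t| ≤ (A * B) * (maj m c t * (t ^ (-(1 / 4) : ℝ) * Real.exp (-t))) := by
  obtain ⟨A, hA, h⟩ := hf.bd
  refine ⟨A, hA, fun m c B y t hB ht hy => ?_⟩
  have := maj_nonneg m c ht
  rw [abs_mul]
  calc |y| * |f t| ≤ (B * maj m c t) * (A * t ^ (-(1 / 4) : ℝ) * Real.exp (-t)) := by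
        gcongr; exact h t ht
    _ = _ := by ring

lemma IsWeight.integrable {f : ℝ → ℝ} (hf : IsWeight f) {ψ : ℝ → ℝ}
    (hψ : ContinuousOn ψ (Ioi 0)) {m : ℕ} {c B : ℝ} (hc : c < 1) (hB : 0 ≤ B)
    (h : ∀ t, 0 < t → |ψ t| ≤ B * maj m c t) :
    IntegrableOn (fun t => ψ t * f t) (Ioi 0) := by
  obtain ⟨A, -, hA⟩ := hf.abs_mul_le
  refine Integrable.mono' ((maj_integrable m hc).const_mul (A * B))
    ((hψ.mul hf.cont).aestronglyMeasurable measurableSet_Ioi) ?_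
  filter_upwards [ae_restrict_mem measurableSet_Ioi] with t ht
  exact hA m c B _ t hB ht (h t ht)

/-- For `x` in a range `(a, c)` with `0 < a` and `c < 1`, powers of `t` compensate the singularities of `φ'` and `φ''` at the
origin: `t φ'(xt)` and `t² φ''(xt)` obey the same bound as `φ(xt)`. -/
lemma IsBessel.bounds {φ φ₁ : ℝ → ℝ} (h : IsBessel φ φ₁) {a c : ℝ} (ha : 0 < a) (hc : c < 1) :
    ∃ B : ℝ, 0 ≤ B ∧ ∀ x ∈ Ioo a c, ∀ t, 0 < t →
      |φ (x * t)| ≤ B * maj 2 c t ∧ |φ₁ (x * t) * t| ≤ B * maj 2 c t ∧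
      |(φ (x * t) - φ₁ (x * t) / (x * t)) * t ^ 2| ≤ B * maj 2 c t := by
  obtain ⟨C, hC, hb⟩ := h.bd
  set q := a ^ (-(1 / 4) : ℝ) with hq
  have hq0 : 0 < q := by positivity
  refine ⟨C * (1 + q) * (1 + 1 / a + 1 / a ^ 2), by positivity, fun x hx t ht => ?_⟩
  have hx0 : 0 < x := ha.trans hx.1
  obtain ⟨h0, h1⟩ := hb (x * t) (by positivity)
  set p := t ^ (-(1 / 4) : ℝ) with hp
  have hp0 : 0 < p := by positivity
  have hexp : Real.exp (x * t) ≤ Real.exp (c * t) := by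
    have := hx.2
    gcongr
  have hxp : (x * t) ^ (-(1 / 4) : ℝ) ≤ q * p := by
    rw [Real.mul_rpow hx0.le ht.le]
    gcongr
    exact Real.rpow_le_rpow_of_nonpos ha hx.1.le (by norm_num)
  have hE := Real.exp_pos (c * t)
  have k0 : |φ (x * t)| ≤ C * (1 + q) * ((1 + p) * Real.exp (c * t)) := by
    calc |φ (x * t)| ≤ _ := h0
      _ ≤ C * (1 + q * p) * Real.exp (c * t) := by gcongr
      _ ≤ C * ((1 + q) * (1 + p)) * Real.exp (c * t) := by gcongr; nlinarith
      _ = _ := by ring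
  have k1 : |φ₁ (x * t) * t| ≤ C * (1 / a) * ((1 + t) * Real.exp (c * t)) := by
    rw [abs_mul, abs_of_pos ht]
    have hx1 : x < 1 := hx.2.trans hc
    have hxa : 1 / x ≤ 1 / a := one_div_le_one_div_of_le ha hx.1.le
    calc |φ₁ (x * t)| * t = (1 / x) * (x * t * |φ₁ (x * t)|) := by field_simp
      _ ≤ (1 / a) * (C * (1 + x * t) * Real.exp (x * t)) := by gcongr
      _ ≤ (1 / a) * (C * (1 + 1 * t) * Real.exp (c * t)) := by gcongr
      _ = _ := by ring
  have hm : maj 2 c t = (1 + t) ^ 2 * ((1 + p) * Real.exp (c * t)) := by rw [maj]; ring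
  have m0 : (1 + p) * Real.exp (c * t) ≤ maj 2 c t := by
    rw [hm]
    exact le_mul_of_one_le_left (by positivity) (by nlinarith)
  have m1 : (1 + t) * Real.exp (c * t) ≤ maj 2 c t := by
    rw [hm, ← mul_assoc]
    gcongr
    nlinarith [mul_pos ht hp0, mul_pos (mul_pos ht ht) hp0]
  have m2 : t ^ 2 * ((1 + p) * Real.exp (c * t)) ≤ maj 2 c t := by
    rw [hm]
    gcongr
    linarith
  have hM := maj_nonneg 2 c ht
  have hCq : C ≤ C * (1 + q) := by nlinarith
  refine ⟨?_, ?_, ?_⟩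
  · calc _ ≤ _ := k0
      _ ≤ C * (1 + q) * maj 2 c t := by gcongr
      _ = C * (1 + q) * 1 * maj 2 c t := by ring
      _ ≤ _ := by
        gcongr
        have : 0 < 1 / a + 1 / a ^ 2 := by positivity
        linarith
  · calc _ ≤ _ := k1
      _ ≤ C * (1 + q) * (1 / a) * maj 2 c t := by gcongr
      _ ≤ _ := by
        gcongr
        have : 0 < 1 / a ^ 2 := by positivity
        linarith
  · have hxa : 1 / x ≤ 1 / a := one_div_le_one_div_of_le ha hx.1.le
    have e : (φ (x * t) - φ₁ (x * t) / (x * t)) * t ^ 2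
        = t ^ 2 * φ (x * t) - (1 / x) * (φ₁ (x * t) * t) := by field_simp
    rw [e]
    calc _ ≤ |t ^ 2 * φ (x * t)| + |(1 / x) * (φ₁ (x * t) * t)| := abs_sub _ _
      _ = t ^ 2 * |φ (x * t)| + (1 / x) * |φ₁ (x * t) * t| := by
        rw [abs_mul, abs_mul (1 / x), abs_of_pos (by positivity : 0 < t ^ 2),
          abs_of_pos (by positivity : 0 < 1 / x)]
      _ ≤ t ^ 2 * (C * (1 + q) * ((1 + p) * Real.exp (c * t)))
          + (1 / a) * (C * (1 / a) * ((1 + t) * Real.exp (c * t))) := by gcongr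
      _ = C * (1 + q) * (t ^ 2 * ((1 + p) * Real.exp (c * t)))
          + C * (1 / a ^ 2) * ((1 + t) * Real.exp (c * t)) := by
        field_simp
      _ ≤ C * (1 + q) * maj 2 c t + C * (1 + q) * (1 / a ^ 2) * maj 2 c t := by gcongr
      _ = C * (1 + q) * (1 + 1 / a ^ 2) * maj 2 c t := by ring
      _ ≤ _ := by
        gcongr
        have : 0 < 1 / a := by positivity
        linarith

lemma pow_mul_maj_le (b m : ℕ) (c : ℝ) {t : ℝ} (ht : 0 < t) :
    t ^ b * maj m c t ≤ maj (m + b) c t := by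
  have : t ^ b ≤ (1 + t) ^ b := by gcongr; linarith
  calc t ^ b * maj m c t ≤ (1 + t) ^ b * maj m c t := by
        have := maj_nonneg m c ht
        gcongr
    _ = _ := by unfold maj; rw [pow_add]; ring

/-- Differentiation of `∫ Ψ(xt) t^b f(t) dt` under the integral sign, together with integrability
of the differentiated integrand. -/
lemma hasDerivAt_transform {f Ψ Ψ₁ : ℝ → ℝ} (hf : IsWeight f)
    (hd : ∀ z, 0 < z → HasDerivAt Ψ (Ψ₁ z) z) (hc : ContinuousOn Ψ₁ (Ioi 0)) (b m : ℕ)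
    (hb : ∀ a c : ℝ, 0 < a → c < 1 → ∃ B : ℝ, 0 ≤ B ∧ ∀ x ∈ Ioo a c, ∀ t, 0 < t →
      |Ψ (x * t) * t ^ b| ≤ B * maj m c t ∧ |Ψ₁ (x * t) * t ^ (b + 1)| ≤ B * maj m c t)
    {x : ℝ} (hx : x ∈ Ioo (0:ℝ) 1) :
    IntegrableOn (fun t => Ψ₁ (x * t) * t ^ (b + 1) * f t) (Ioi 0) ∧
    HasDerivAt (fun x => ∫ t in Ioi (0:ℝ), Ψ (x * t) * t ^ b * f t)
      (∫ t in Ioi (0:ℝ), Ψ₁ (x * t) * t ^ (b + 1) * f t) x := by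
  obtain ⟨hx0, hx1⟩ := hx
  have hac : x ∈ Ioo (x / 2) ((1 + x) / 2) := ⟨by linarith, by linarith⟩
  have hc1 : (1 + x) / 2 < 1 := by linarith
  obtain ⟨B, hB, hbd⟩ := hb (x / 2) ((1 + x) / 2) (by linarith) hc1
  obtain ⟨A, hA, hA'⟩ := hf.abs_mul_le
  have hΨ : ContinuousOn Ψ (Ioi 0) := fun z hz => (hd z hz).continuousAt.continuousWithinAt
  have cont (g : ℝ → ℝ) (hg : ContinuousOn g (Ioi 0)) (n : ℕ) (y : ℝ) (hy : 0 < y) :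
      ContinuousOn (fun t => g (y * t) * t ^ n) (Ioi 0) := by
    refine ContinuousOn.mul ?_ (by fun_prop)
    exact hg.comp (by fun_prop) fun t ht => mul_pos hy ht
  refine hasDerivAt_integral_of_dominated_loc_of_deriv_le (s := Ioo (x / 2) ((1 + x) / 2))
    (F := fun x t => Ψ (x * t) * t ^ b * f t)
    (F' := fun x t => Ψ₁ (x * t) * t ^ (b + 1) * f t)
    (bound := fun t => (A * B) * (maj m ((1 + x) / 2) t
      * (t ^ (-(1 / 4) : ℝ) * Real.exp (-t))))
    (Ioo_mem_nhds hac.1 hac.2) ?_ ?_ ?_ ?_ ?_ ?_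
  · filter_upwards [lt_mem_nhds hx0] with y hy
    exact ((cont Ψ hΨ b y hy).mul hf.cont).aestronglyMeasurable measurableSet_Ioi
  · exact hf.integrable (cont Ψ hΨ b x hx0) hc1 hB fun t ht => (hbd x hac t ht).1
  · exact ((cont Ψ₁ hc (b + 1) x hx0).mul hf.cont).aestronglyMeasurable measurableSet_Ioi
  · filter_upwards [ae_restrict_mem measurableSet_Ioi] with t ht y hy
    exact hA' _ _ _ _ t hB ht (hbd y hy t ht).2
  · exact (maj_integrable m hc1).const_mul _
  · filter_upwards [ae_restrict_mem measurableSet_Ioi] with t ht y hy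
    have hy0 : 0 < y := by linarith [hy.1]
    have h := (hd (y * t) (mul_pos hy0 ht)).comp y ((hasDerivAt_id y).mul_const t)
    refine ((h.mul_const (t ^ b)).mul_const (f t)).congr_deriv ?_
    ring

/-- The Bessel transforms `∫ φ(xt) t^l f(t) dt` for even `l`, and `∫ φ'(xt) t^l f(t) dt` for
odd `l`. For `l = 2k` this is the `k`-th iterate of the Bessel operator `D² + D/x` applied to
`∫ φ(xt) f(t) dt`, and for `l = 2k + 1` the derivative of that iterate. -/
noncomputable def PP (φ φ₁ f : ℝ → ℝ) (l : ℕ) (x : ℝ) : ℝ :=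
  ∫ t in Ioi (0:ℝ), (if Even l then φ else φ₁) (x * t) * t ^ l * f t

/-- The coefficient of `-P_l / x` in the derivative of `P_l`. -/
noncomputable def cc (l : ℕ) : ℝ := if Even l then 0 else 1

lemma PP_hasDerivAt {φ φ₁ f : ℝ → ℝ} (h : IsBessel φ φ₁) (hf : IsWeight f) (l : ℕ)
    {x : ℝ} (hx : x ∈ Ioo (0:ℝ) 1) :
    HasDerivAt (PP φ φ₁ f l) (PP φ φ₁ f (l + 1) x - cc l / x * PP φ φ₁ f l x) x := by
  have c0 : ContinuousOn φ (Ioi 0) := fun z hz => (h.d0 z hz).continuousAt.continuousWithinAt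
  have c1 : ContinuousOn φ₁ (Ioi 0) := fun z hz => (h.d1 z hz).continuousAt.continuousWithinAt
  have step (b : ℕ) {y B c t : ℝ} (hB : 0 ≤ B) (ht : 0 < t) (hy : |y| ≤ B * maj 2 c t) :
      |y * t ^ b| ≤ B * maj (2 + b) c t := by
    rw [abs_mul, abs_of_pos (by positivity : 0 < t ^ b)]
    calc |y| * t ^ b ≤ (B * maj 2 c t) * t ^ b := by gcongr
      _ = B * (t ^ b * maj 2 c t) := by ring
      _ ≤ _ := by gcongr; exact pow_mul_maj_le b 2 c ht
  have deven (k : ℕ) := hasDerivAt_transform hf h.d0 c1 k (2 + k) (by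
    intro a c ha hc
    obtain ⟨B, hB, hb⟩ := h.bounds ha hc
    refine ⟨B, hB, fun x hx t ht => ?_⟩
    obtain ⟨b1, b2, -⟩ := hb x hx t ht
    refine ⟨step k hB ht b1, ?_⟩
    have := step k hB ht b2
    rwa [mul_assoc, ← pow_succ'] at this) hx
  rcases Nat.even_or_odd l with hl | ⟨k, rfl⟩
  · have hl' : ¬ Even (l + 1) := by simpa [Nat.even_add_one] using hl
    unfold PP cc
    simp only [if_pos hl, if_neg hl', zero_div, zero_mul, sub_zero]
    exact (deven l).2
  · have hl : ¬ Even (2 * k + 1) := by simp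
    have hl' : Even (2 * k + 1 + 1) := ⟨k + 1, by ring⟩
    have dodd := hasDerivAt_transform hf h.d1
      (c0.sub (c1.div continuousOn_id fun z hz => ne_of_gt hz)) (2 * k + 1) (2 + 2 * k) (by
      intro a c ha hc
      obtain ⟨B, hB, hb⟩ := h.bounds ha hc
      refine ⟨B, hB, fun x hx t ht => ?_⟩
      obtain ⟨-, b2, b3⟩ := hb x hx t ht
      constructor
      · have := step (2 * k) hB ht b2
        rwa [mul_assoc, ← pow_succ'] at this
      · have := step (2 * k) hB ht b3
        rwa [mul_assoc, ← pow_add, show t ^ (2 + 2 * k) = t ^ (2 * k + 1 + 1) by ring] at this) hx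
    unfold PP cc
    simp only [if_pos hl', if_neg hl]
    refine dodd.2.congr_deriv ?_
    have i1 := (deven (2 * k)).1
    rw [← integral_const_mul, eq_sub_iff_add_eq,
      ← integral_add dodd.1 (i1.const_mul _)]
    refine setIntegral_congr_fun measurableSet_Ioi fun t ht => ?_
    have ht : t ≠ 0 := ne_of_gt ht
    have hx0 : x ≠ 0 := ne_of_gt hx.1
    field_simp
    ring

/-! ### Limits of the transforms at the origin -/

/-- Dominated convergence as `x → 0⁺` for a kernel `ψ x t` whose limit `l` does not depend on
`t`. -/
lemma tendsto_transform {f : ℝ → ℝ} (hf : IsWeight f) (ψ : ℝ → ℝ → ℝ) (m b : ℕ) {B l : ℝ}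
    (hB : 0 ≤ B)
    (hc : ∀ x ∈ Ioo (0:ℝ) (1 / 2), ContinuousOn (ψ x) (Ioi 0))
    (hb : ∀ x ∈ Ioo (0:ℝ) (1 / 2), ∀ t, 0 < t → |ψ x t| ≤ B * maj m (1 / 2) t)
    (hl : ∀ t, 0 < t → Tendsto (fun x => ψ x t) (𝓝[>] 0) (𝓝 l)) :
    Tendsto (fun x => ∫ t in Ioi (0:ℝ), ψ x t * t ^ b * f t) (𝓝[>] 0)
      (𝓝 (l * ∫ t in Ioi (0:ℝ), f t * t ^ b)) := by
  obtain ⟨A, hA, hA'⟩ := hf.abs_mul_le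
  have hev : ∀ᶠ x in 𝓝[>] (0:ℝ), x ∈ Ioo (0:ℝ) (1 / 2) := Ioo_mem_nhdsGT (by norm_num)
  rw [← integral_const_mul]
  refine tendsto_integral_filter_of_dominated_convergence
    (fun t => (A * B) * (maj (m + b) (1 / 2) t * (t ^ (-(1 / 4) : ℝ) * Real.exp (-t))))
    ?_ ?_ ((maj_integrable (m + b) (by norm_num)).const_mul _) ?_
  · filter_upwards [hev] with x hx
    exact (((hc x hx).mul (by fun_prop)).mul hf.cont).aestronglyMeasurable measurableSet_Ioi
  · filter_upwards [hev] with x hx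
    filter_upwards [ae_restrict_mem measurableSet_Ioi] with t ht
    have ht : 0 < t := ht
    refine hA' _ _ _ _ t hB ht ?_
    rw [abs_mul, abs_of_pos (by positivity : 0 < t ^ b)]
    calc |ψ x t| * t ^ b ≤ (B * maj m (1 / 2) t) * t ^ b := by
          gcongr; exact hb x hx t ht
      _ = B * (t ^ b * maj m (1 / 2) t) := by ring
      _ ≤ _ := by gcongr; exact pow_mul_maj_le b m _ ht
  · filter_upwards [ae_restrict_mem measurableSet_Ioi] with t ht
    have := ((hl t ht).mul_const (t ^ b)).mul_const (f t)
    convert this using 2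
    ring

lemma tendsto_mul_nhdsGT {t : ℝ} (ht : 0 < t) :
    Tendsto (fun x : ℝ => x * t) (𝓝[>] 0) (𝓝[>] 0) := by
  refine tendsto_nhdsWithin_iff.2 ⟨?_, ?_⟩
  · have : Tendsto (fun x : ℝ => x * t) (𝓝 0) (𝓝 (0 * t)) := tendsto_id.mul_const t
    rw [zero_mul] at this
    exact this.mono_left nhdsWithin_le_nhds
  · filter_upwards [self_mem_nhdsWithin] with x hx
    exact mul_pos hx ht

lemma exp_le_maj {x t : ℝ} (hx : x ∈ Ioo (0:ℝ) (1 / 2)) (ht : 0 < t) :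
    Real.exp (x * t) ≤ maj 0 (1 / 2) t := by
  have h : Real.exp (x * t) ≤ Real.exp (1 / 2 * t) := by
    have := hx.2.le
    gcongr
  have hp : 0 < t ^ (-(1 / 4) : ℝ) := by positivity
  have := Real.exp_pos (1 / 2 * t)
  simp only [maj, pow_zero, one_mul]
  nlinarith

lemma tendsto_PP_I {f : ℝ → ℝ} (hf : IsWeight f) (l : ℕ) :
    Tendsto (PP (Ic 0) (Ic 1) f l) (𝓝[>] 0)
      (𝓝 (if Even l then ∫ t in Ioi (0:ℝ), f t * t ^ l else 0)) := by
  have key (n : ℕ) := tendsto_transform hf (fun x t => Ic n (x * t)) 0 l (l := Ic n 0) zero_le_one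
    (fun x _ => ((continuous_Ic n).comp (by fun_prop)).continuousOn)
    (fun x hx t ht => by
      rw [one_mul]
      exact (abs_Ic_le n (mul_pos hx.1 ht).le).trans (exp_le_maj hx ht))
    (fun t ht => ((continuous_Ic n).tendsto 0).comp
      ((tendsto_mul_nhdsGT ht).mono_right nhdsWithin_le_nhds))
  by_cases hl : Even l
  · have := key 0
    rw [Ic_zero_zero, one_mul] at this
    unfold PP
    simpa only [if_pos hl] using! this
  · have := key 1
    rw [Ic_one_zero, zero_mul] at this
    unfold PP
    simpa only [if_neg hl] using! this

lemma tendsto_PP_K_even {f : ℝ → ℝ} (hf : IsWeight f) {l : ℕ} (hl : Even l) :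
    Tendsto (fun x => x * PP (Kc 0) (fun z => -Kc 1 z) f l x) (𝓝[>] 0) (𝓝 0) := by
  obtain ⟨C, hC, hb⟩ := K0_bound 2 (by norm_num)
  rw [show (-(1 / (2 * ((2:ℕ):ℝ)))) = -(1 / 4) by norm_num] at hb
  have bound {x t : ℝ} (hx : 0 < x) (ht : 0 < t) :
      |x * Kc 0 (x * t)| ≤ C * t ^ (-(1 / 4) : ℝ) * x ^ (3 / 4 : ℝ) := by
    have h := hb (x * t) (mul_pos hx ht)
    have hK := Kc_nonneg 0 (x * t)
    rw [abs_of_nonneg (by positivity)]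
    have e : x * x ^ (-(1 / 4) : ℝ) = x ^ (3 / 4 : ℝ) := by
      rw [← Real.rpow_one_add' hx.le (by norm_num)]; norm_num
    calc x * Kc 0 (x * t) ≤ x * (C * (x * t) ^ (-(1 / 4) : ℝ) * Real.exp (-(x * t))) := by gcongr
      _ ≤ x * (C * (x * t) ^ (-(1 / 4) : ℝ) * 1) := by
        gcongr
        exact Real.exp_le_one_iff.2 (by have := mul_pos hx ht; linarith)
      _ = _ := by
        rw [Real.mul_rpow hx.le ht.le, ← e]; ring
  have key := tendsto_transform hf (fun x t => x * Kc 0 (x * t)) 0 l (l := 0) hC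
    (fun x hx => continuousOn_const.mul ((continuousOn_Kc 0).comp (by fun_prop)
      fun t ht => mul_pos hx.1 ht))
    (fun x hx t ht => by
      have hx0 := hx.1
      refine (bound hx.1 ht).trans ?_
      have h1 : x ^ (3 / 4 : ℝ) ≤ 1 :=
        Real.rpow_le_one hx.1.le (by linarith [hx.2]) (by norm_num)
      have h2 : 1 ≤ Real.exp (1 / 2 * t) := Real.one_le_exp (by positivity)
      simp only [maj, pow_zero, one_mul]
      set p := t ^ (-(1 / 4) : ℝ) with hp
      have hp0 : 0 < p := by positivity
      calc C * p * x ^ (3 / 4 : ℝ) ≤ C * (1 + p) * Real.exp (1 / 2 * t) := by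
            gcongr <;> linarith
        _ = _ := by ring)
    (fun t ht => by
      have h0 : Tendsto (fun x : ℝ => C * t ^ (-(1 / 4) : ℝ) * x ^ (3 / 4 : ℝ)) (𝓝[>] 0)
          (𝓝 0) := by
        have : Continuous fun x : ℝ => C * t ^ (-(1 / 4) : ℝ) * x ^ (3 / 4 : ℝ) :=
          continuous_const.mul (Real.continuous_rpow_const (by norm_num))
        have := (this.tendsto 0).mono_left (nhdsWithin_le_nhds (s := Ioi 0))
        rwa [Real.zero_rpow (by norm_num), mul_zero] at this
      refine squeeze_zero_norm' ?_ h0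
      filter_upwards [self_mem_nhdsWithin] with x hx
      exact bound hx ht)
  rw [zero_mul] at key
  refine key.congr fun x => ?_
  unfold PP
  simp only [if_pos hl]
  rw [← integral_const_mul]
  congr 1; funext t; ring

lemma tendsto_PP_K_odd {f : ℝ → ℝ} (hf : IsWeight f) {l : ℕ} (hl : ¬ Even l) :
    Tendsto (fun x => x * PP (Kc 0) (fun z => -Kc 1 z) f l x) (𝓝[>] 0)
      (𝓝 (-∫ t in Ioi (0:ℝ), f t * t ^ (l - 1))) := by
  have key := tendsto_transform hf (fun x t => -(x * t * Kc 1 (x * t))) 0 (l - 1) (l := -1)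
    zero_le_one
    (fun x hx => (ContinuousOn.mul (by fun_prop) ((continuousOn_Kc 1).comp (by fun_prop)
      fun t ht => mul_pos hx.1 ht)).neg)
    (fun x hx t ht => by
      have hz := mul_pos hx.1 ht
      have hK := Kc_nonneg 1 (x * t)
      rw [abs_neg, abs_of_nonneg (by positivity), one_mul]
      refine le_trans ?_ (exp_le_maj hx ht)
      have h1 : Real.exp (-(x * t)) ≤ 1 := Real.exp_le_one_iff.2 (by linarith)
      linarith [(K1_bounds hz).2, Real.add_one_le_exp (x * t)])
    (fun t ht => by
      have hK : Tendsto (fun z => z * Kc 1 z) (𝓝[>] 0) (𝓝 1) := by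
        have c1 : Tendsto (fun z : ℝ => Real.exp (-z)) (𝓝[>] 0) (𝓝 1) := by
          have : Continuous fun z : ℝ => Real.exp (-z) := by fun_prop
          simpa using (this.tendsto 0).mono_left (nhdsWithin_le_nhds (s := Ioi 0))
        have c2 : Tendsto (fun z : ℝ => Real.exp (-z) + z) (𝓝[>] 0) (𝓝 1) := by
          have : Continuous fun z : ℝ => Real.exp (-z) + z := by fun_prop
          simpa using (this.tendsto 0).mono_left (nhdsWithin_le_nhds (s := Ioi 0))
        refine tendsto_of_tendsto_of_tendsto_of_le_of_le' c1 c2 ?_ ?_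
        · filter_upwards [self_mem_nhdsWithin] with z hz using (K1_bounds hz).1
        · filter_upwards [self_mem_nhdsWithin] with z hz using (K1_bounds hz).2
      exact (hK.comp (tendsto_mul_nhdsGT ht)).neg)
  rw [neg_one_mul] at key
  refine key.congr fun x => ?_
  unfold PP
  simp only [if_neg hl]
  rw [← integral_const_mul]
  congr 1; funext t
  have : t ^ l = t ^ (l - 1) * t := by
    rw [← pow_succ]
    congr 1
    have : l ≠ 0 := by rintro rfl; simp at hl
    lia
  rw [this]; ring

/-! ### Triangular passage from derivatives to Bessel transforms -/

/-- Coefficients of the triangular relation `D^l P_0 = ∑_{m ≤ l} α_{l,m} x^{m-l} P_m`. -/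
noncomputable def al : ℕ → ℕ → ℝ
  | 0, m => if m = 0 then 1 else 0
  | l + 1, m => ((m : ℝ) - l - cc m) * al l m + (if m = 0 then 0 else al l (m - 1))

lemma al_eq_zero {l m : ℕ} (h : l < m) : al l m = 0 := by
  induction l generalizing m with
  | zero => simp [al]; lia
  | succ l ih =>
    rw [al, ih (by lia), if_neg (by lia), ih (by lia)]; simp

lemma al_self (l : ℕ) : al l l = 1 := by
  induction l with
  | zero => simp [al]
  | succ l ih => rw [al, al_eq_zero (by lia), if_neg (by lia)]; simp [ih]

lemma iteratedDeriv_eq_sum {P : ℕ → ℝ → ℝ}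
    (h : ∀ l, ∀ x ∈ Ioo (0:ℝ) 1, HasDerivAt (P l) (P (l + 1) x - cc l / x * P l x) x)
    (l N : ℕ) (hl : l < N) {x : ℝ} (hx : x ∈ Ioo (0:ℝ) 1) :
    iteratedDeriv l (P 0) x
      = ∑ m ∈ Finset.range N, al l m * x ^ ((m : ℤ) - l) * P m x := by
  induction l generalizing x with
  | zero =>
    rw [Finset.sum_eq_single_of_mem 0 (by simpa using hl)]
    · simp [al]
    · intro m _ hm; simp [al, hm]
  | succ l ih =>
    have hx0 : x ≠ 0 := ne_of_gt hx.1
    have heq : iteratedDeriv l (P 0) =ᶠ[𝓝 x]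
        fun y => ∑ m ∈ Finset.range N, al l m * y ^ ((m : ℤ) - l) * P m y := by
      filter_upwards [Ioo_mem_nhds hx.1 hx.2] with y hy using ih (by lia) hy
    have hd : HasDerivAt (fun y => ∑ m ∈ Finset.range N, al l m * y ^ ((m : ℤ) - l) * P m y)
        (∑ m ∈ Finset.range N, (al l m * (((m : ℤ) - l : ℤ) * x ^ ((m : ℤ) - l - 1)) * P m x
          + al l m * x ^ ((m : ℤ) - l) * (P (m + 1) x - cc m / x * P m x))) x := by
      refine HasDerivAt.fun_sum fun m _ => ?_
      exact ((hasDerivAt_zpow _ x (Or.inl hx0)).const_mul _).mul (h m x hx)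
    rw [iteratedDeriv_succ, heq.deriv_eq, hd.deriv]
    obtain ⟨N, rfl⟩ : ∃ M, N = M + 1 := ⟨N - 1, by lia⟩
    have e1 : ∑ m ∈ Finset.range (N + 1), al l m * x ^ ((m : ℤ) - l) * P (m + 1) x
        = ∑ m ∈ Finset.range (N + 1), (if m = 0 then 0 else al l (m - 1))
          * x ^ ((m : ℤ) - (l + 1 : ℕ)) * P m x := by
      rw [Finset.sum_range_succ, al_eq_zero (by lia), Finset.sum_range_succ']
      simp
    calc _ = ∑ m ∈ Finset.range (N + 1), ((m : ℝ) - l - cc m) * al l m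
              * x ^ ((m : ℤ) - (l + 1 : ℕ)) * P m x
            + ∑ m ∈ Finset.range (N + 1), al l m * x ^ ((m : ℤ) - l) * P (m + 1) x := by
          rw [← Finset.sum_add_distrib]
          refine Finset.sum_congr rfl fun m _ => ?_
          have z1 : x ^ ((m : ℤ) - l - 1) = x ^ ((m : ℤ) - (l + 1 : ℕ)) := by
            congr 1; push_cast; ring
          have z2 : x ^ ((m : ℤ) - l) = x ^ ((m : ℤ) - (l + 1 : ℕ)) * x := by
            rw [← z1, ← zpow_add_one₀ hx0]; ring_nf
          rw [z1, z2]
          push_cast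
          field_simp
          ring
      _ = _ := by
          rw [e1, ← Finset.sum_add_distrib]
          refine Finset.sum_congr rfl fun m _ => ?_
          rw [al]; ring

/-! ### The determinant -/

/-- The entry in row `l`, column `i` of the matrix of the perfect shuffle of `2r` indices: the
columns `c` and `r + c` (with `c < r`) have their entry `1` in the rows `2c` and `2c + 1`. -/
noncomputable def shuffle (r l i : ℕ) : ℝ :=
  if (i < r ∧ l = 2 * i) ∨ (r ≤ i ∧ l = 2 * (i - r) + 1) then 1 else 0

/-- The sign of the shuffle, by expanding along the first two rows. -/
lemma det_shuffle (r : ℕ) :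
    Matrix.det (Matrix.of fun l i : Fin (2 * r) => shuffle r l i) = (-1) ^ (r * (r - 1) / 2) := by
  induction r with
  | zero => simp
  | succ r ih =>
    have h0 : Matrix.det (Matrix.of fun l i : Fin (2 * r + 1 + 1) => shuffle (r + 1) l i)
        = Matrix.det (Matrix.of fun l i : Fin (2 * r + 1) =>
            shuffle (r + 1) ((l : ℕ) + 1) ((i : ℕ) + 1)) := by
      rw [Matrix.det_succ_row_zero, Fin.sum_univ_succ, Finset.sum_eq_zero]
      · simp only [Fin.succAbove_zero]
        simp [shuffle, Matrix.submatrix]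
      · intro i _
        have : shuffle (r + 1) 0 ((i : ℕ) + 1) = 0 := if_neg (by lia)
        simp [this]
    have h1 : Matrix.det (Matrix.of fun l i : Fin (2 * r + 1) =>
            shuffle (r + 1) ((l : ℕ) + 1) ((i : ℕ) + 1))
        = (-1) ^ r * Matrix.det (Matrix.of fun l i : Fin (2 * r) => shuffle r l i) := by
      have hr : r < 2 * r + 1 := by lia
      rw [Matrix.det_succ_row_zero, Finset.sum_eq_single_of_mem ⟨r, hr⟩ (Finset.mem_univ _)]
      · have e : shuffle (r + 1) 1 (r + 1) = 1 := if_pos (by lia)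
        simp only [Matrix.of_apply, Fin.val_zero, zero_add, e, mul_one]
        congr 2
        ext l i
        simp only [Matrix.submatrix_apply, Matrix.of_apply, Fin.val_succ]
        by_cases hi : (i : ℕ) < r
        · rw [Fin.succAbove_of_castSucc_lt _ _ (by simpa [Fin.lt_def] using hi)]
          unfold shuffle
          simp only [Fin.val_castSucc]
          congr 1
          apply propext; lia
        · rw [Fin.succAbove_of_le_castSucc _ _ (by simpa [Fin.le_def] using hi)]
          unfold shuffle
          simp only [Fin.val_succ]
          congr 1
          apply propext; lia
      · intro i _ hi
        have hi' : (i : ℕ) ≠ r := fun h => hi (Fin.ext h)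
        have : shuffle (r + 1) 1 ((i : ℕ) + 1) = 0 := if_neg (by lia)
        simp [this]
    change Matrix.det (Matrix.of fun l i : Fin (2 * r + 1 + 1) => shuffle (r + 1) l i) = _
    rw [h0, h1, ih, ← pow_add]
    congr 1
    rcases r with _ | r
    · rfl
    · simp only [Nat.add_sub_cancel]
      rw [show (r + 1 + 1) * (r + 1) = (r + 1) * r + (r + 1) * 2 by ring,
        Nat.add_mul_div_right _ _ two_pos, add_comm]

/-- The determinant of the limit matrix: it is the shuffle matrix times the block-diagonal matrix
with blocks `Mᵀ` and `-Mᵀ`. -/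
lemma det_limit (r : ℕ) (m : ℕ → ℕ → ℝ) :
    Matrix.det (Matrix.of fun l i : Fin (2 * r) =>
      if (i : ℕ) < r then (if Even (l : ℕ) then m i l else 0)
      else (if Even (l : ℕ) then 0 else -m ((i : ℕ) - r) ((l : ℕ) - 1)))
    = (-1) ^ (r * (r + 1) / 2)
      * (Matrix.det (Matrix.of fun i j : Fin r => m i (2 * j))) ^ 2 := by
  set M : Matrix (Fin r) (Fin r) ℝ := Matrix.of fun i j : Fin r => m i (2 * j) with hM
  let e : Fin r ⊕ Fin r ≃ Fin (2 * r) := finSumFinEquiv.trans (finCongr (two_mul r).symm)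
  have el (k : Fin r) : ((e (Sum.inl k) : Fin (2 * r)) : ℕ) = k := by simp [e]
  have er (k : Fin r) : ((e (Sum.inr k) : Fin (2 * r)) : ℕ) = r + k := by simp [e, add_comm]
  have hN : Matrix.det (Matrix.of fun l i : Fin (2 * r) =>
      if (i : ℕ) < r then (if Even (l : ℕ) then m i l else 0)
      else (if Even (l : ℕ) then 0 else -m ((i : ℕ) - r) ((l : ℕ) - 1)))
    = Matrix.det (Matrix.of fun l i : Fin (2 * r) => shuffle r l i)
      * Matrix.det (Matrix.fromBlocks M.transpose 0 0 (-M.transpose)) := by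
    rw [← Matrix.det_submatrix_equiv_self e.symm (Matrix.fromBlocks M.transpose 0 0 _),
      ← Matrix.det_mul]
    congr 1
    ext l i
    rw [Matrix.mul_apply, ← e.sum_comp, Fintype.sum_sum_type]
    simp only [Matrix.of_apply, Matrix.submatrix_apply, Equiv.symm_apply_apply, el, er]
    obtain ⟨i, rfl⟩ := e.surjective i
    have hlt := l.2
    rcases i with i | i
    · have s0 : ∀ k : Fin r, shuffle r l (r + k) * Matrix.fromBlocks M.transpose 0 0
          (-M.transpose) (Sum.inr k) (Sum.inl i) = 0 := fun k => by simp
      simp only [Equiv.symm_apply_apply, el, s0, Finset.sum_const_zero, add_zero, i.2, if_true,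
        Matrix.fromBlocks_apply₁₁, Matrix.transpose_apply]
      by_cases hl : Even (l : ℕ)
      · obtain ⟨k, hk⟩ := hl.two_dvd
        rw [if_pos hl, Finset.sum_eq_single_of_mem (⟨k, by lia⟩ : Fin r) (Finset.mem_univ _)]
        · have : shuffle r l k = 1 := if_pos (Or.inl ⟨by lia, hk⟩)
          simp only [this, one_mul]
          simp [hM, hk]
        · intro k' _ hk'
          have : (k' : ℕ) ≠ k := fun h => hk' (Fin.ext h)
          have : shuffle r l k' = 0 := if_neg (by have := k'.2; lia)
          simp [this]
      · rw [if_neg hl, Finset.sum_eq_zero]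
        intro k _
        have : shuffle r l k = 0 := if_neg (by
          have := k.2
          rintro (h | h)
          · exact hl (by rw [h.2]; simp)
          · lia)
        simp [this]
    · have s0 : ∀ k : Fin r, shuffle r l k * Matrix.fromBlocks M.transpose 0 0
          (-M.transpose) (Sum.inl k) (Sum.inr i) = 0 := fun k => by simp
      simp only [Equiv.symm_apply_apply, er, s0, Finset.sum_const_zero, zero_add,
        Matrix.fromBlocks_apply₂₂, Matrix.neg_apply, Matrix.transpose_apply]
      rw [if_neg (by lia), Nat.add_sub_cancel_left]
      by_cases hl : Even (l : ℕ)
      · rw [if_pos hl, Finset.sum_eq_zero]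
        intro k _
        have : shuffle r l (r + k) = 0 := if_neg (by
          rintro (h | h)
          · lia
          · have h2 := h.2
            rw [h2] at hl
            simp at hl)
        simp [this]
      · obtain ⟨k, hk⟩ := Nat.not_even_iff_odd.1 hl
        rw [if_neg hl, Finset.sum_eq_single_of_mem (⟨k, by lia⟩ : Fin r) (Finset.mem_univ _)]
        · have : shuffle r l (r + k) = 1 := if_pos (Or.inr ⟨by lia, by lia⟩)
          simp only [this, one_mul]
          simp [hM, hk]
        · intro k' _ hk'
          have : (k' : ℕ) ≠ k := fun h => hk' (Fin.ext h)
          have : shuffle r l (r + k') = 0 := if_neg (by have := k'.2; lia)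
          simp [this]
  rw [hN, det_shuffle, Matrix.det_fromBlocks_zero₂₁, Matrix.det_neg, Matrix.det_transpose,
    Fintype.card_fin]
  have : r * (r + 1) / 2 = r * (r - 1) / 2 + r := by
    rcases r with _ | r
    · rfl
    · simp only [Nat.add_sub_cancel]
      rw [show (r + 1) * (r + 1 + 1) = (r + 1) * r + (r + 1) * 2 by ring,
        Nat.add_mul_div_right _ _ two_pos]
  rw [this, pow_add]
  ring

/-- The weight `I₀^a K₀^(2r-1-a)` of the Bessel moments. -/
noncomputable def wt (r a : ℕ) (t : ℝ) : ℝ := I0 t ^ a * K0 t ^ (2 * r - 1 - a)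

/-- The Bessel transforms belonging to `g_i`; the index `l = 0` gives `g_i` itself. -/
noncomputable def Q (r i l : ℕ) : ℝ → ℝ :=
  if i < r then PP (Ic 0) (Ic 1) (wt r i) l
  else PP (Kc 0) (fun z => -Kc 1 z) (wt r (i - r)) l

lemma g_eq (r : ℕ) (i : Fin (2 * r)) : g r i = Q r i 0 := by
  funext x
  unfold g Q
  split_ifs with h
  · simp [PP, wt, I0_eq, mul_assoc]
  · have : 2 * r - 1 - ((i : ℕ) - r) = 3 * r - 1 - i := by lia
    simp [PP, wt, K0_eq, mul_assoc, this]

/-- Replacing the derivatives by Bessel transforms is a unitriangular row operation. -/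
lemma w_eq (r : ℕ) {x : ℝ} (hx : x ∈ Ioo (0:ℝ) 1) :
    w r x = Matrix.det (Matrix.of fun l i : Fin (2 * r) => Q r i l x) := by
  have hA : Matrix.det (Matrix.of fun l m : Fin (2 * r) =>
      al l m * x ^ (((m : ℕ) : ℤ) - ((l : ℕ) : ℤ))) = 1 := by
    rw [Matrix.det_of_isLowerTriangular]
    · simp [al_self]
    · intro l m hlm
      have hlm : (l : ℕ) < m := hlm
      simp [al_eq_zero hlm]
  have hQ (i : Fin (2 * r)) : ∀ l, ∀ x ∈ Ioo (0:ℝ) 1,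
      HasDerivAt (Q r i l) (Q r i (l + 1) x - cc l / x * Q r i l x) x := by
    intro l x hx
    unfold Q
    split_ifs with h
    · exact PP_hasDerivAt isBessel_I (isWeight _ _ (by lia)) l hx
    · exact PP_hasDerivAt isBessel_K (isWeight _ _ (by lia)) l hx
  rw [w, ← one_mul (Matrix.det (Matrix.of fun l i : Fin (2 * r) => Q r i l x)), ← hA,
    ← Matrix.det_mul]
  congr 1
  ext l i
  rw [Matrix.mul_apply, Matrix.of_apply, g_eq, iteratedDeriv_eq_sum (hQ i) l (2 * r) l.2 hx,
    Finset.sum_range]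
  rfl

theorem wronskian_even_at_zero (r : ℕ) (hr : 2 ≤ r) :
    Filter.Tendsto (fun x : ℝ => x ^ r * w r x)
      (nhdsWithin 0 (Set.Ioo (0:ℝ) 1))
      (nhds ((-1 : ℝ) ^ (r * (r + 1) / 2) * (Mmat r).det ^ 2)) := by
  have hle : 𝓝[Ioo (0:ℝ) 1] 0 ≤ 𝓝[>] 0 := nhdsWithin_mono _ Ioo_subset_Ioi_self
  have hM : Mmat r = Matrix.of fun i j : Fin r =>
      (fun a b : ℕ => ∫ t in Ioi (0:ℝ), wt r a t * t ^ b) (i : ℕ) (2 * (j : ℕ)) := rfl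
  rw [hM, ← det_limit r fun a b : ℕ => ∫ t in Ioi (0:ℝ), wt r a t * t ^ b]
  -- The factor `x ^ r` is spread over the `r` columns built from `K₀`.
  have hcol : ∀ x ∈ Ioo (0:ℝ) 1, Matrix.det (Matrix.of fun l i : Fin (2 * r) =>
      (if (i : ℕ) < r then 1 else x) * Q r i l x) = x ^ r * w r x := by
    intro x hx
    rw [w_eq r hx]
    have := Matrix.det_mul_row (fun i : Fin (2 * r) => if (i : ℕ) < r then (1:ℝ) else x)
      (Matrix.of fun l i : Fin (2 * r) => Q r i l x)
    simp only [Matrix.of_apply] at this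
    rw [this]
    congr 1
    rw [← (finSumFinEquiv.trans (finCongr (two_mul r).symm)).prod_comp, Fintype.prod_sum_type]
    simp
  refine Tendsto.congr' (by filter_upwards [self_mem_nhdsWithin] with x hx using hcol x hx) ?_
  refine ((continuous_id.matrix_det).tendsto _).comp
    (tendsto_pi_nhds.2 fun l => tendsto_pi_nhds.2 fun i => Tendsto.mono_left ?_ hle)
  simp only [Matrix.of_apply]
  unfold Q
  by_cases h : (i : ℕ) < r
  · simp only [if_pos h, one_mul]
    exact tendsto_PP_I (isWeight i (2 * r - 1 - i) (by lia)) l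
  · have hf := isWeight (i - r) (2 * r - 1 - (i - r)) (by lia)
    simp only [if_neg h]
    by_cases hl : Even (l : ℕ)
    · rw [if_pos hl]
      exact tendsto_PP_K_even hf hl
    · rw [if_neg hl]
      exact tendsto_PP_K_odd hf hl
end

section
/- Let r ≥ 2 be an integer. Define functions g_1, …, g_{2r} on the interval (0,1) by g_i(x) = ∫₀^∞ I₀(xt) I₀(t)^{i−1} K₀(t)^{2r−i} dt for 1 ≤ i ≤ r, and g_i(x) = ∫₀^∞ K₀(xt) I₀(t)^{i−r−1} K₀(t)^{3r−i} dt for r < i ≤ 2r, and let ω_{2r}(x) be the Wronskian determinant det( (d/dx)^{l−1} g_i(x) )_{1 ≤ l, i ≤ 2r}. Then lim_{x → 1⁻} (1−x)^r · ω_{2r}(x) = (−1)^{r(r+1)/2} · ((r−1)!/2^r) · det N_{r−1} · det N_r. -/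
/-!
The proof computes the limit of the Wronskian column by column.

Each `g r i` has the form `x ↦ ∫ f₀(xt) φ(t) dt` with `f₀ = I₀` or `f₀ = K₀` and `φ` a product of
powers of `I₀` and `K₀`. Because `f₀` solves the modified Bessel equation `f'' = f - f' / s`, every
derivative of `g r i` is a combination, with coefficients that depend only on `x`, of the moments
`∫ t^l f_l(xt) φ(t) dt`, where `f_l` is `f₀` or `f₀'` according to the parity of `l`. The
coefficient matrix is lower triangular with unit diagonal, so the Wronskian equals the determinant
of the moment matrix (`iteratedDeriv_mom`, `w_eq_det`).

As `x → 1⁻`, all the columns but one converge by dominated convergence (`tendsto_mom`). The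
exception is the last column of the first kind, with `φ = I₀^(r-1) K₀^r`: there the integrand decays
only like `exp (-(1 - x) t)`. The asymptotics of `I₀`, `I₁`, `K₀` at infinity, obtained from Laplace's
method, show that after multiplication by `(1 - x)^r` the column tends to
`(0, …, 0, (r - 1)! / 2^r)` (`tendsto_crit`, `tendsto_crit_zero`).

It remains to evaluate the determinant of the limit (`det_limMat`). Listing the odd rows first costs
the sign `(-1)^(r(r+1)/2)`. Subtracting from each regular column with `f₀ = I₀` the column with
`f₀ = K₀` whose weight has one more factor `I₀` kills the even rows, since
`I₀ · I₀^i K₀^(q+1) = K₀ · I₀^(i+1) K₀^q`, and turns the odd rows into moments of `2r - 2` Bessel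
functions by the relation `t (I₁ K₀ + I₀ K₁) = 1` (`bessel_wronskian`). The result is block upper
triangular, with diagonal blocks the transpose of `N_r` and a matrix whose last column is
`(0, …, 0, (r - 1)! / 2^r)` and whose remaining block is the transpose of `N_(r-1)`.
-/

open MeasureTheory Real

/-- The matrix `N_r` with `(i,j)`-entry `IKM_{2r}(i-1, 2j-2)` for `1 ≤ i,j ≤ r`. -/
noncomputable def Nmat (r : ℕ) : Matrix (Fin r) (Fin r) ℝ :=
  Matrix.of fun i j => IKM (2 * r) (i : ℕ) (2 * (j : ℕ))

section

open Set Filter Topology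

/-! ### Integral representations of the Bessel functions -/

/-- The trigonometric integral `∫₀^π cosᵏ θ · exp (t cos θ) dθ`. -/
noncomputable def cosInt (k : ℕ) (t : ℝ) : ℝ :=
  ∫ θ in (0:ℝ)..π, cos θ ^ k * exp (t * cos θ)

/-- The modified Bessel function `I₁`, which is the derivative of `I₀`. -/
noncomputable def I1 (t : ℝ) : ℝ := (1 / π) * cosInt 1 t

/-- The hyperbolic integral `∫₀^∞ coshᵏ u · exp (-t cosh u) du`, convergent for `t > 0`. -/
noncomputable def coshInt (k : ℕ) (t : ℝ) : ℝ :=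
  ∫ u in Ioi (0:ℝ), cosh u ^ k * exp (-t * cosh u)

/-- The modified Bessel function `K₁`, which is minus the derivative of `K₀`. -/
noncomputable def K1 (t : ℝ) : ℝ := coshInt 1 t

lemma I0_eq_s19 (t : ℝ) : I0 t = (1 / π) * cosInt 0 t := by simp [I0, cosInt]

lemma K0_eq_s19 (t : ℝ) : K0 t = coshInt 0 t := by simp [K0, coshInt]

lemma hasDerivAt_cosInt (k : ℕ) (t : ℝ) : HasDerivAt (cosInt k) (cosInt (k + 1) t) t := by
  refine (intervalIntegral.hasDerivAt_integral_of_dominated_loc_of_deriv_le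
    (F := fun t θ => cos θ ^ k * exp (t * cos θ))
    (F' := fun t θ => cos θ ^ (k + 1) * exp (t * cos θ))
    (s := Metric.ball t 1) (bound := fun _ => exp (|t| + 1))
    (Metric.ball_mem_nhds t one_pos) ?_ ?_ ?_ ?_ ?_ ?_).2
  · exact Eventually.of_forall fun x =>
      (by fun_prop : Continuous fun θ => cos θ ^ k * exp (x * cos θ)).aestronglyMeasurable
  · exact (by fun_prop : Continuous fun θ => cos θ ^ k * exp (t * cos θ)).intervalIntegrable _ _
  · exact (by fun_prop : Continuous fun θ =>
      cos θ ^ (k + 1) * exp (t * cos θ)).aestronglyMeasurable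
  · refine Eventually.of_forall fun θ _ x hx => ?_
    have hx' : |x| ≤ |t| + 1 := by
      have := abs_sub_abs_le_abs_sub x t
      rw [Metric.mem_ball, Real.dist_eq] at hx
      linarith
    have hc : |cos θ| ≤ 1 := abs_cos_le_one θ
    rw [norm_mul, norm_pow, Real.norm_eq_abs, Real.norm_eq_abs, abs_of_pos (exp_pos _)]
    calc |cos θ| ^ (k + 1) * exp (x * cos θ) ≤ 1 * exp (|t| + 1) := by
          gcongr
          · exact pow_le_one₀ (abs_nonneg _) hc
          · calc x * cos θ ≤ |x * cos θ| := le_abs_self _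
              _ = |x| * |cos θ| := abs_mul _ _
              _ ≤ (|t| + 1) * 1 := by gcongr
              _ = _ := mul_one _
      _ = _ := one_mul _
  · exact continuous_const.intervalIntegrable _ _
  · refine Eventually.of_forall fun θ _ x _ => ?_
    have := ((hasDerivAt_id x).mul_const (cos θ)).exp.const_mul (cos θ ^ k)
    convert! this using 1
    simp; ring

lemma hasDerivAt_I0 (t : ℝ) : HasDerivAt I0 (I1 t) t := by
  have := (hasDerivAt_cosInt 0 t).const_mul (1 / π)
  rwa [show (fun t => 1 / π * cosInt 0 t) = I0 from funext fun t => (I0_eq_s19 t).symm] at this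

/-- Integration by parts: the derivative of `sin θ · exp (t cos θ)` integrates to zero. -/
lemma cosInt_one_eq (t : ℝ) : cosInt 1 t = t * (cosInt 0 t - cosInt 2 t) := by
  have h := intervalIntegral.integral_eq_sub_of_hasDerivAt (a := 0) (b := π)
    (f := fun θ => sin θ * exp (t * cos θ))
    (f' := fun θ => cos θ ^ 1 * exp (t * cos θ)
      - t * (cos θ ^ 0 * exp (t * cos θ) - cos θ ^ 2 * exp (t * cos θ)))
    (fun θ _ => by
      have := (hasDerivAt_sin θ).mul ((hasDerivAt_cos θ).const_mul t).exp
      convert! this using 1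
      have h2 : sin θ ^ 2 = 1 - cos θ ^ 2 := by rw [← sin_sq_add_cos_sq θ]; ring
      linear_combination (t * exp (t * cos θ)) * h2)
    ((by fun_prop : Continuous fun θ => cos θ ^ 1 * exp (t * cos θ)
      - t * (cos θ ^ 0 * exp (t * cos θ) - cos θ ^ 2 * exp (t * cos θ))).intervalIntegrable _ _)
  have hi : ∀ k : ℕ, IntervalIntegrable (fun θ => cos θ ^ k * exp (t * cos θ)) volume 0 π :=
    fun k => (by fun_prop : Continuous fun θ => cos θ ^ k * exp (t * cos θ)).intervalIntegrable _ _
  rw [intervalIntegral.integral_sub (hi 1) (((hi 0).sub (hi 2)).const_mul t),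
    intervalIntegral.integral_const_mul, intervalIntegral.integral_sub (hi 0) (hi 2)] at h
  simp only [sin_pi, sin_zero, zero_mul, sub_zero] at h
  unfold cosInt
  linarith

lemma hasDerivAt_I1 {t : ℝ} (ht : 0 < t) : HasDerivAt I1 (I0 t - I1 t / t) t := by
  have := (hasDerivAt_cosInt 1 t).const_mul (1 / π)
  convert! this using 1
  rw [I0_eq_s19, I1, cosInt_one_eq]
  field_simp
  ring

lemma I0_nonneg (t : ℝ) : 0 ≤ I0 t := by
  rw [I0_eq_s19]
  refine mul_nonneg (by positivity) (intervalIntegral.integral_nonneg pi_pos.le fun θ _ => ?_)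
  positivity

lemma abs_cosInt_le (k : ℕ) (t : ℝ) : |cosInt k t| ≤ cosInt 0 t := by
  have := intervalIntegral.norm_integral_le_of_norm_le (a := 0) (b := π) (μ := volume) pi_pos.le
    (f := fun θ => cos θ ^ k * exp (t * cos θ)) (g := fun θ => cos θ ^ 0 * exp (t * cos θ))
    (Eventually.of_forall fun θ _ => ?_)
    ((by fun_prop : Continuous fun θ => cos θ ^ 0 * exp (t * cos θ)).intervalIntegrable _ _)
  · exact this
  · rw [norm_mul, norm_pow, Real.norm_eq_abs, Real.norm_eq_abs, abs_of_pos (exp_pos _), pow_zero]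
    gcongr
    exact pow_le_one₀ (abs_nonneg _) (abs_cos_le_one θ)

lemma abs_I1_le (t : ℝ) : |I1 t| ≤ I0 t := by
  rw [I0_eq_s19, I1, abs_mul, abs_of_pos (by positivity : 0 < 1 / π)]
  gcongr
  exact abs_cosInt_le 1 t

lemma I0_le_exp {t : ℝ} (ht : 0 ≤ t) : I0 t ≤ exp t := by
  have : cosInt 0 t ≤ π * exp t := by
    have h := intervalIntegral.norm_integral_le_of_norm_le_const (a := 0) (b := π) (C := exp t)
      (f := fun θ => cos θ ^ 0 * exp (t * cos θ)) (fun θ _ => ?_)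
    · rw [sub_zero, abs_of_pos pi_pos, mul_comm] at h
      exact (le_abs_self _).trans h
    · simp only [pow_zero, one_mul, Real.norm_eq_abs, abs_of_pos (exp_pos _)]
      gcongr
      nlinarith [cos_le_one θ]
  rw [I0_eq_s19]
  calc 1 / π * cosInt 0 t ≤ 1 / π * (π * exp t) := by gcongr
    _ = exp t := by field_simp

lemma exp_le_two_cosh (u : ℝ) : exp u / 2 ≤ cosh u := by
  rw [cosh_eq]; linarith [exp_pos (-u)]

/-- Since `coshᵏ⁺¹ u · exp (-t cosh u)` is bounded, the integrand of `coshInt k` decays like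
`1 / cosh u`. -/
lemma cosh_pow_mul_exp_le_s19 (k : ℕ) {t : ℝ} (ht : 0 < t) (u : ℝ) :
    cosh u ^ k * exp (-t * cosh u) ≤ 2 * (k + 1).factorial / t ^ (k + 1) * exp (-u) := by
  have hc := cosh_pos u
  have h1 := Real.pow_div_factorial_le_exp (t * cosh u) (by positivity) (k + 1)
  have h2 : cosh u ^ (k + 1) * exp (-t * cosh u) ≤ (k + 1).factorial / t ^ (k + 1) := by
    rw [neg_mul, Real.exp_neg, ← div_eq_mul_inv, div_le_div_iff₀ (exp_pos _) (by positivity)]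
    rw [div_le_iff₀ (by positivity), mul_pow] at h1
    linarith
  have h3 : 1 ≤ cosh u * (2 * exp (-u)) := by
    have := exp_le_two_cosh u
    have h4 : exp u * exp (-u) = 1 := by rw [← exp_add]; simp
    nlinarith [exp_pos (-u)]
  calc cosh u ^ k * exp (-t * cosh u)
      ≤ cosh u ^ k * exp (-t * cosh u) * (cosh u * (2 * exp (-u))) :=
        le_mul_of_one_le_right (by positivity) h3
    _ = cosh u ^ (k + 1) * exp (-t * cosh u) * (2 * exp (-u)) := by ring
    _ ≤ (k + 1).factorial / t ^ (k + 1) * (2 * exp (-u)) := by gcongr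
    _ = _ := by ring

lemma integrableOn_exp_neg : IntegrableOn (fun u : ℝ => exp (-u)) (Ioi 0) := by
  simpa using integrableOn_exp_mul_Ioi (a := -1) (by norm_num) 0

lemma integrableOn_coshInt (k : ℕ) {t : ℝ} (ht : 0 < t) :
    IntegrableOn (fun u => cosh u ^ k * exp (-t * cosh u)) (Ioi 0) := by
  refine Integrable.mono' (integrableOn_exp_neg.const_mul (2 * (k + 1).factorial / t ^ (k + 1)))
    (by fun_prop : Continuous fun u => cosh u ^ k * exp (-t * cosh u)).aestronglyMeasurable
    (Eventually.of_forall fun u => ?_)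
  have hc := cosh_pos u
  rw [Real.norm_eq_abs, abs_of_nonneg (by positivity)]
  exact cosh_pow_mul_exp_le_s19 k ht u

lemma hasDerivAt_coshInt (k : ℕ) {t : ℝ} (ht : 0 < t) :
    HasDerivAt (coshInt k) (-coshInt (k + 1) t) t := by
  have := (hasDerivAt_integral_of_dominated_loc_of_deriv_le (μ := volume.restrict (Ioi (0:ℝ)))
    (F := fun t u => cosh u ^ k * exp (-t * cosh u))
    (F' := fun t u => -(cosh u ^ (k + 1) * exp (-t * cosh u)))
    (x₀ := t) (s := Ioi (t / 2)) (bound := fun u => cosh u ^ (k + 1) * exp (-(t / 2) * cosh u))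
    (Ioi_mem_nhds (by linarith)) ?_ (integrableOn_coshInt k ht) ?_ ?_
    (integrableOn_coshInt (k + 1) (by positivity)) ?_).2
  · rw [integral_neg] at this
    exact this
  · exact Eventually.of_forall fun x =>
      (by fun_prop : Continuous fun u => cosh u ^ k * exp (-x * cosh u)).aestronglyMeasurable
  · exact (by fun_prop : Continuous fun u =>
      -(cosh u ^ (k + 1) * exp (-t * cosh u))).aestronglyMeasurable
  · refine Eventually.of_forall fun u x hx => ?_
    have hc := cosh_pos u
    rw [norm_neg, Real.norm_eq_abs, abs_of_nonneg (by positivity)]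
    have : t / 2 < x := hx
    gcongr
  · refine Eventually.of_forall fun u x _ => ?_
    have := ((hasDerivAt_id x).neg.mul_const (cosh u)).exp.const_mul (cosh u ^ k)
    convert! this using 1
    simp; ring

lemma hasDerivAt_K0 {t : ℝ} (ht : 0 < t) : HasDerivAt K0 (-K1 t) t := by
  have := hasDerivAt_coshInt 0 ht
  rwa [← show K0 = coshInt 0 from funext K0_eq_s19] at this

/-- Integration by parts: the derivative of `sinh u · exp (-t cosh u)` integrates to zero. -/
lemma coshInt_one_eq {t : ℝ} (ht : 0 < t) :
    coshInt 1 t = t * (coshInt 2 t - coshInt 0 t) := by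
  have hi := fun k => integrableOn_coshInt k ht
  have h := integral_Ioi_of_hasDerivAt_of_tendsto' (a := 0) (m := 0)
    (f := fun u => sinh u * exp (-t * cosh u))
    (f' := fun u => cosh u ^ 1 * exp (-t * cosh u)
      - t * (cosh u ^ 2 * exp (-t * cosh u) - cosh u ^ 0 * exp (-t * cosh u)))
    (fun u _ => by
      have := (hasDerivAt_sinh u).mul ((hasDerivAt_cosh u).const_mul (-t)).exp
      convert! this using 1
      have h2 : sinh u ^ 2 = cosh u ^ 2 - 1 := Real.sinh_sq u
      linear_combination (t * exp (-t * cosh u)) * h2)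
    ((hi 1).sub (((hi 2).sub (hi 0)).const_mul t)) ?_
  · have h20 : Integrable (fun u => cosh u ^ 2 * exp (-t * cosh u) - cosh u ^ 0 * exp (-t * cosh u))
        (volume.restrict (Ioi 0)) := (hi 2).sub (hi 0)
    rw [integral_sub (hi 1) (h20.const_mul t), integral_const_mul,
      integral_sub (hi 2) (hi 0)] at h
    simp only [sinh_zero, zero_mul, sub_zero] at h
    unfold coshInt
    linarith
  · have hb : Tendsto (fun u : ℝ => 2 * ((1 + 1).factorial : ℝ) / t ^ (1 + 1) * exp (-u))
        atTop (𝓝 0) := by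
      simpa only [mul_zero] using tendsto_exp_neg_atTop_nhds_zero.const_mul
        (2 * ((1 + 1).factorial : ℝ) / t ^ (1 + 1))
    refine squeeze_zero' ?_ ?_ hb
    · filter_upwards [eventually_ge_atTop 0] with u hu
      exact mul_nonneg (sinh_nonneg_iff.2 hu) (exp_pos _).le
    · refine Eventually.of_forall fun u => le_trans ?_ (cosh_pow_mul_exp_le_s19 1 ht u)
      rw [pow_one]
      gcongr
      exact (sinh_lt_cosh u).le

lemma hasDerivAt_K1 {t : ℝ} (ht : 0 < t) : HasDerivAt K1 (-K0 t - K1 t / t) t := by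
  have := hasDerivAt_coshInt 1 ht
  convert! this using 1
  rw [K0_eq_s19, K1, coshInt_one_eq ht]
  field_simp
  ring

lemma coshInt_nonneg (k : ℕ) (t : ℝ) : 0 ≤ coshInt k t := by
  refine integral_nonneg fun u => ?_
  have := cosh_pos u
  simp only [Pi.zero_apply]; positivity

lemma K0_nonneg (t : ℝ) : 0 ≤ K0 t := K0_eq_s19 t ▸ coshInt_nonneg 0 t

lemma K1_nonneg (t : ℝ) : 0 ≤ K1 t := coshInt_nonneg 1 t

/-- Both bounds come from comparing `cosh u` with `sinh u` in the integral for `t K₁(t)`: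
`∫₀^∞ t sinh u · exp (-t cosh u) du = exp (-t)`, and `0 ≤ cosh u - sinh u = exp (-u)`. -/
lemma exp_neg_le_mul_K1 {t : ℝ} (ht : 0 < t) :
    exp (-t) ≤ t * K1 t ∧ t * K1 t ≤ exp (-t) + t * exp (-t) := by
  have hlim : Tendsto (fun u => -exp (-t * cosh u)) atTop (𝓝 0) := by
    rw [← neg_zero]
    refine Tendsto.neg ?_
    have hb : Tendsto (fun u : ℝ => 2 * ((0 + 1).factorial : ℝ) / t ^ (0 + 1) * exp (-u))
        atTop (𝓝 0) := by
      simpa only [mul_zero] using tendsto_exp_neg_atTop_nhds_zero.const_mul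
        (2 * ((0 + 1).factorial : ℝ) / t ^ (0 + 1))
    refine squeeze_zero (fun u => (exp_pos _).le) (fun u => ?_) hb
    simpa using cosh_pow_mul_exp_le_s19 0 ht u
  have hint : IntegrableOn (fun u => t * sinh u * exp (-t * cosh u)) (Ioi 0) := by
    refine Integrable.mono' ((integrableOn_coshInt 1 ht).const_mul t)
      (by fun_prop : Continuous fun u => t * sinh u * exp (-t * cosh u)).aestronglyMeasurable
      ((ae_restrict_iff' measurableSet_Ioi).2 (Eventually.of_forall fun u hu => ?_))
    have h0 : 0 ≤ sinh u := sinh_nonneg_iff.2 (le_of_lt hu)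
    rw [Real.norm_eq_abs, abs_of_nonneg (by positivity), pow_one, mul_assoc]
    gcongr
    exact (sinh_lt_cosh u).le
  have h := integral_Ioi_of_hasDerivAt_of_tendsto' (a := 0) (m := 0)
    (f := fun u => -exp (-t * cosh u)) (f' := fun u => t * sinh u * exp (-t * cosh u))
    (fun u _ => by
      have := ((hasDerivAt_cosh u).const_mul (-t)).exp.neg
      convert! this using 1
      ring) hint hlim
  simp only [cosh_zero, mul_one, zero_sub, neg_neg] at h
  have hK : t * K1 t = ∫ u in Ioi (0:ℝ), t * (cosh u ^ 1 * exp (-t * cosh u)) := by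
    rw [integral_const_mul]; rfl
  have hE : t * exp (-t) = ∫ u in Ioi (0:ℝ), t * exp (-t) * exp (-u) := by
    rw [integral_const_mul, integral_exp_neg_Ioi_zero, mul_one]
  have hi1 := (integrableOn_coshInt 1 ht).const_mul t
  have hiE := integrableOn_exp_neg.const_mul (t * exp (-t))
  constructor
  · rw [hK, ← h]
    refine setIntegral_mono hint hi1 fun u => ?_
    have := (sinh_lt_cosh u).le
    simp only [pow_one, mul_assoc]
    gcongr
  · rw [hE]
    nth_rewrite 1 [← h]
    rw [← integral_add hint hiE, hK]
    refine setIntegral_mono hi1 (hint.add hiE) fun u => ?_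
    have h1 : cosh u = sinh u + exp (-u) := by rw [← cosh_sub_sinh]; ring
    have h2 : exp (-t * cosh u) ≤ exp (-t) := by
      gcongr
      nlinarith [one_le_cosh u]
    have h3 : t * (exp (-u) * exp (-t * cosh u)) ≤ t * (exp (-u) * exp (-t)) := by gcongr
    simp only [pow_one]
    linear_combination h3 + (t * exp (-t * cosh u)) * h1

lemma mul_K1_le_one {t : ℝ} (ht : 0 < t) : t * K1 t ≤ 1 := by
  refine (exp_neg_le_mul_K1 ht).2.trans ?_
  have h1 : exp t * exp (-t) = 1 := by rw [← exp_add]; simp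
  nlinarith [add_one_le_exp t, exp_pos (-t)]

lemma tendsto_mul_K1 : Tendsto (fun t => t * K1 t) (𝓝[>] 0) (𝓝 1) := by
  have h1 : Tendsto (fun t : ℝ => exp (-t)) (𝓝[>] 0) (𝓝 1) := by
    have : Continuous fun t : ℝ => exp (-t) := by fun_prop
    simpa using (this.tendsto 0).mono_left nhdsWithin_le_nhds
  refine tendsto_of_tendsto_of_tendsto_of_le_of_le' h1 tendsto_const_nhds ?_ ?_
  · filter_upwards [self_mem_nhdsWithin] with t ht using (exp_neg_le_mul_K1 ht).1
  · filter_upwards [self_mem_nhdsWithin] with t ht using mul_K1_le_one ht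

/-- A crude power bound; inserted under the integral defining `K₀`, it shows that `K₀` is
`O(t ^ (-ε))` for every `ε > 0`. -/
lemma exp_neg_le_rpow {ε z : ℝ} (hε : 0 < ε) (hε1 : ε ≤ 1) (hz : 0 < z) :
    exp (-z) ≤ z ^ (-ε) := by
  rw [rpow_neg hz.le, Real.exp_neg]
  gcongr
  rcases le_total z 1 with h | h
  · exact (rpow_le_one hz.le h hε.le).trans (one_le_exp hz.le)
  · calc z ^ ε ≤ z ^ (1:ℝ) := rpow_le_rpow_of_exponent_le h hε1
      _ = z := rpow_one z
      _ ≤ exp z := by linarith [add_one_le_exp z]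

lemma K0_le_rpow {ε t : ℝ} (hε : 0 < ε) (hε1 : ε ≤ 1) (ht : 0 < t) :
    K0 t ≤ (t / 2) ^ (-ε) * (1 / ε) := by
  have hi : IntegrableOn (fun u => exp (-ε * u)) (Ioi 0) := integrableOn_exp_mul_Ioi (by linarith) 0
  have he : ∫ u in Ioi (0:ℝ), exp (-ε * u) = 1 / ε := by
    rw [integral_exp_mul_Ioi (by linarith)]; simp
  rw [← he, ← integral_const_mul, K0_eq_s19]
  refine setIntegral_mono (integrableOn_coshInt 0 ht) (hi.const_mul _) fun u => ?_
  have h1 := exp_neg_le_rpow hε hε1 (z := t / 2 * exp u) (by positivity)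
  have h2 := exp_le_two_cosh u
  simp only [pow_zero, one_mul]
  calc exp (-t * cosh u) ≤ exp (-(t / 2 * exp u)) := by
        gcongr
        nlinarith
    _ ≤ (t / 2 * exp u) ^ (-ε) := h1
    _ = _ := by
      rw [mul_rpow (by positivity) (exp_pos _).le, ← exp_mul]
      ring_nf

/-! ### Laplace asymptotics at infinity -/

lemma tendsto_sqrt_mul_comp_div {f : ℝ → ℝ} (hf : HasDerivAt f 1 0) (h0 : f 0 = 0) (a : ℝ) :
    Tendsto (fun t => √t * f (a / √t)) atTop (𝓝 a) := by
  have h1 : HasDerivAt (fun y => f (a * y)) a 0 := by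
    have h2 : HasDerivAt (fun y : ℝ => a * y) a 0 := by simpa using (hasDerivAt_id (0:ℝ)).const_mul a
    have := HasDerivAt.comp (0:ℝ) (h₂ := f) (h := fun y => a * y) (by simpa using hf) h2
    convert! this using 1
    simp
  rw [hasDerivAt_iff_tendsto_slope_zero] at h1
  have h3 : Tendsto (fun t : ℝ => (√t)⁻¹) atTop (𝓝[≠] 0) :=
    (tendsto_inv_atTop_nhdsGT_zero.comp tendsto_sqrt_atTop).mono_right
      (nhdsWithin_mono _ fun x hx => ne_of_gt hx)
  refine (h1.comp h3).congr fun t => ?_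
  simp [h0, div_eq_mul_inv]

lemma one_add_sq_le_cosh (x : ℝ) : 1 + x ^ 2 / 2 ≤ cosh x := by
  wlog hx : 0 ≤ x generalizing x
  · simpa using this (-x) (by linarith)
  have h1 : cosh x = 1 + 2 * sinh (x / 2) ^ 2 := by
    have := Real.cosh_two_mul (x / 2)
    rw [show 2 * (x / 2) = x by ring, Real.cosh_sq] at this
    linarith
  have h2 : x / 2 ≤ sinh (x / 2) := Real.self_le_sinh_iff.2 (by linarith)
  nlinarith

lemma tendsto_mul_one_sub_cos (v : ℝ) :
    Tendsto (fun t => t * (cos (v / √t) - 1)) atTop (𝓝 (-(1 / 2) * v ^ 2)) := by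
  have h := tendsto_sqrt_mul_comp_div (f := sin) (by simpa using hasDerivAt_sin 0) sin_zero (v / 2)
  have h2 := (h.pow 2).const_mul (-2)
  rw [show -2 * (v / 2) ^ 2 = -(1 / 2) * v ^ 2 by ring] at h2
  refine h2.congr' ?_
  filter_upwards [eventually_ge_atTop 0] with t ht
  have := cos_sq' (v / 2 / √t)
  have h3 := cos_two_mul (v / 2 / √t)
  rw [show 2 * (v / 2 / √t) = v / √t by ring] at h3
  rw [mul_pow, sq_sqrt ht, h3, this]
  ring

lemma tendsto_mul_cosh_sub_one (v : ℝ) :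
    Tendsto (fun t => -t * (cosh (v / √t) - 1)) atTop (𝓝 (-(1 / 2) * v ^ 2)) := by
  have h := tendsto_sqrt_mul_comp_div (f := sinh) (by simpa using hasDerivAt_sinh 0) sinh_zero
    (v / 2)
  have h2 := (h.pow 2).const_mul (-2)
  rw [show -2 * (v / 2) ^ 2 = -(1 / 2) * v ^ 2 by ring] at h2
  refine h2.congr' ?_
  filter_upwards [eventually_ge_atTop 0] with t ht
  have := Real.cosh_sq (v / 2 / √t)
  have h3 := Real.cosh_two_mul (v / 2 / √t)
  rw [show 2 * (v / 2 / √t) = v / √t by ring] at h3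
  rw [mul_pow, sq_sqrt ht, h3, this]
  ring

lemma integrableOn_gauss {b : ℝ} (hb : 0 < b) :
    IntegrableOn (fun v : ℝ => exp (-b * v ^ 2)) (Ioi 0) :=
  (integrable_exp_neg_mul_sq hb).integrableOn

/-- The integrand of `√t e⁻ᵗ · cosInt k t` after the substitution `θ = v / √t`. -/
noncomputable def cosScaled (k : ℕ) (t v : ℝ) : ℝ :=
  (Iic (π * √t)).indicator (fun v => cos (v / √t) ^ k * exp (t * (cos (v / √t) - 1))) v

lemma cosInt_scaled (k : ℕ) {t : ℝ} (ht : 0 < t) :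
    √t * exp (-t) * cosInt k t = ∫ v in Ioi (0:ℝ), cosScaled k t v := by
  have hs : 0 < √t := sqrt_pos.2 ht
  have h := intervalIntegral.integral_comp_div (a := 0) (b := π * √t)
    (fun θ => cos θ ^ k * exp (t * cos θ)) hs.ne'
  rw [zero_div, mul_div_cancel_right₀ _ hs.ne', smul_eq_mul] at h
  unfold cosScaled
  rw [setIntegral_indicator measurableSet_Iic, Ioi_inter_Iic,
    ← intervalIntegral.integral_of_le (by positivity)]
  calc √t * exp (-t) * cosInt k t = exp (-t) * (√t * cosInt k t) := by ring
    _ = _ := by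
      rw [cosInt, ← h, ← intervalIntegral.integral_const_mul]
      congr 1; ext v
      rw [mul_sub, mul_one, sub_eq_add_neg, exp_add]; ring

lemma cosScaled_le (k : ℕ) {t v : ℝ} (ht : 0 < t) (hv : 0 < v) :
    ‖cosScaled k t v‖ ≤ exp (-(2 / π ^ 2) * v ^ 2) := by
  have hs : 0 < √t := sqrt_pos.2 ht
  unfold cosScaled
  by_cases h : v ≤ π * √t
  · rw [indicator_of_mem (show v ∈ Iic (π * √t) from h), norm_mul, norm_pow, Real.norm_eq_abs,
      Real.norm_eq_abs, abs_of_pos (exp_pos _)]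
    have hx : |v / √t| ≤ π := by
      rw [abs_of_pos (by positivity), div_le_iff₀ hs]; exact h
    have h1 := Real.cos_le_one_sub_mul_cos_sq hx
    rw [div_pow, sq_sqrt ht.le] at h1
    have h2 : t * (cos (v / √t) - 1) ≤ t * (-(2 / π ^ 2) * (v ^ 2 / t)) := by gcongr; linarith
    have h3 : t * (-(2 / π ^ 2) * (v ^ 2 / t)) = -(2 / π ^ 2) * v ^ 2 := by field_simp
    rw [h3] at h2
    calc |cos (v / √t)| ^ k * exp (t * (cos (v / √t) - 1))
        ≤ 1 * exp (-(2 / π ^ 2) * v ^ 2) := by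
          gcongr
          exact pow_le_one₀ (abs_nonneg _) (abs_cos_le_one _)
      _ = _ := one_mul _
  · rw [indicator_of_notMem (show v ∉ Iic (π * √t) from h), norm_zero]
    positivity

lemma measurable_cosScaled (k : ℕ) (t : ℝ) : Measurable (cosScaled k t) := by
  unfold cosScaled
  exact Measurable.indicator (by fun_prop) measurableSet_Iic

lemma cosInt_bound (k : ℕ) {t : ℝ} (ht : 0 < t) :
    |√t * exp (-t) * cosInt k t| ≤ ∫ v in Ioi (0:ℝ), exp (-(2 / π ^ 2) * v ^ 2) := by
  rw [cosInt_scaled k ht, ← Real.norm_eq_abs]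
  refine norm_integral_le_of_norm_le (μ := volume.restrict (Ioi (0:ℝ)))
    (integrableOn_gauss (b := 2 / π ^ 2) (by positivity)) ?_
  exact (ae_restrict_iff' measurableSet_Ioi).2 (Eventually.of_forall fun v hv => cosScaled_le k ht hv)

lemma gauss_half : ∫ v in Ioi (0:ℝ), exp (-(1 / 2) * v ^ 2) = √(π / 2) := by
  rw [integral_gaussian_Ioi]
  rw [show π / (1 / 2) = 2 ^ 2 * (π / 2) by ring, sqrt_mul (by positivity), sqrt_sq (by norm_num)]
  ring

lemma tendsto_cosInt (k : ℕ) :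
    Tendsto (fun t => √t * exp (-t) * cosInt k t) atTop (𝓝 √(π / 2)) := by
  rw [← gauss_half]
  have : Tendsto (fun t => ∫ v in Ioi (0:ℝ), cosScaled k t v) atTop
      (𝓝 (∫ v in Ioi (0:ℝ), exp (-(1 / 2) * v ^ 2))) := by
    refine tendsto_integral_filter_of_dominated_convergence
      (fun v => exp (-(2 / π ^ 2) * v ^ 2))
      (Eventually.of_forall fun t => (measurable_cosScaled k t).aestronglyMeasurable) ?_
      (integrableOn_gauss (by positivity)) ?_
    · filter_upwards [eventually_gt_atTop 0] with t ht
      exact (ae_restrict_iff' measurableSet_Ioi).2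
        (Eventually.of_forall fun v hv => cosScaled_le k ht hv)
    · refine Eventually.of_forall fun v => ?_
      have h0 : Tendsto (fun t : ℝ => v / √t) atTop (𝓝 0) :=
        tendsto_const_nhds.div_atTop tendsto_sqrt_atTop
      have h1 : Tendsto (fun t : ℝ => cos (v / √t) ^ k) atTop (𝓝 1) := by
        have := ((continuous_cos.tendsto 0).comp h0).pow k
        simpa using this
      have h2 := h1.mul ((continuous_exp.tendsto _).comp (tendsto_mul_one_sub_cos v))
      rw [one_mul] at h2
      refine h2.congr' ?_
      have h3 : ∀ᶠ t : ℝ in atTop, v ≤ π * √t :=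
        (tendsto_sqrt_atTop.const_mul_atTop pi_pos).eventually_ge_atTop v
      filter_upwards [h3] with t ht
      simp [cosScaled, indicator, ht]
  refine this.congr' ?_
  filter_upwards [eventually_gt_atTop 0] with t ht using (cosInt_scaled k ht).symm

lemma K0_scaled {t : ℝ} (ht : 0 < t) :
    √t * exp t * K0 t = ∫ v in Ioi (0:ℝ), exp (-t * (cosh (v / √t) - 1)) := by
  have hs : 0 < √t := sqrt_pos.2 ht
  have h := integral_comp_mul_left_Ioi (fun u => exp (-t * (cosh u - 1))) 0 (inv_pos.2 hs)
  simp only [mul_zero, inv_inv, smul_eq_mul] at h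
  simp only [div_eq_inv_mul]
  rw [h, mul_assoc, K0, ← integral_const_mul]
  congr 2; ext v
  rw [← exp_add]; ring_nf

lemma K0_scaled_le {t : ℝ} (ht : 0 < t) (v : ℝ) :
    ‖exp (-t * (cosh (v / √t) - 1))‖ ≤ exp (-(1 / 2) * v ^ 2) := by
  rw [Real.norm_eq_abs, abs_of_pos (exp_pos _)]
  refine exp_le_exp.2 ?_
  have h := one_add_sq_le_cosh (v / √t)
  rw [div_pow, sq_sqrt ht.le] at h
  have h2 : t * (v ^ 2 / t / 2) ≤ t * (cosh (v / √t) - 1) :=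
    mul_le_mul_of_nonneg_left (by linarith) ht.le
  have h3 : t * (v ^ 2 / t / 2) = v ^ 2 / 2 := by field_simp
  linarith

lemma tendsto_K0 : Tendsto (fun t => √t * exp t * K0 t) atTop (𝓝 √(π / 2)) := by
  rw [← gauss_half]
  have : Tendsto (fun t => ∫ v in Ioi (0:ℝ), exp (-t * (cosh (v / √t) - 1))) atTop
      (𝓝 (∫ v in Ioi (0:ℝ), exp (-(1 / 2) * v ^ 2))) := by
    refine tendsto_integral_filter_of_dominated_convergence
      (fun v => exp (-(1 / 2) * v ^ 2))
      (Eventually.of_forall fun t => ?_) ?_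
      (integrableOn_gauss (by positivity)) ?_
    · exact (by fun_prop : Continuous fun v =>
        exp (-t * (cosh (v / √t) - 1))).aestronglyMeasurable
    · filter_upwards [eventually_gt_atTop 0] with t ht
      exact Eventually.of_forall fun v => K0_scaled_le ht v
    · refine Eventually.of_forall fun v => ?_
      exact (continuous_exp.tendsto _).comp (tendsto_mul_cosh_sub_one v)
  refine this.congr' ?_
  filter_upwards [eventually_gt_atTop 0] with t ht using (K0_scaled ht).symm

lemma sqrt_mul_K0_le {t : ℝ} (ht : 0 < t) : √t * exp t * K0 t ≤ √(π / 2) := by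
  have := norm_integral_le_of_norm_le (μ := volume.restrict (Ioi (0:ℝ)))
    (integrableOn_gauss (b := 1 / 2) (by positivity))
    (Eventually.of_forall fun v => K0_scaled_le ht v)
  rw [← K0_scaled ht, gauss_half] at this
  exact (le_abs_self _).trans this

/-- `K₀` is bounded by `t ^ (-ε) e⁻ᵗ`: at infinity by the Laplace asymptotics, at the origin because
its singularity is only logarithmic. -/
lemma exists_K0_le {ε : ℝ} (hε : 0 < ε) (hε1 : ε ≤ 1 / 2) :
    ∃ C, 0 < C ∧ ∀ t, 0 < t → K0 t ≤ C * (t ^ (-ε) * exp (-t)) := by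
  refine ⟨√(π / 2) + 2 ^ ε * (1 / ε) * exp 1, by positivity, fun t ht => ?_⟩
  have htε : 0 < t ^ (-ε) := rpow_pos_of_pos ht _
  rw [add_mul]
  rcases le_total t 1 with h | h
  · have h1 := K0_le_rpow hε (by linarith) ht
    have h2 : 1 ≤ exp 1 * exp (-t) := by
      rw [← exp_add]; exact one_le_exp (by linarith)
    have h3 : (t / 2) ^ (-ε) = t ^ (-ε) * 2 ^ ε := by
      rw [div_rpow ht.le (by norm_num), rpow_neg (by norm_num : (0:ℝ) ≤ 2), div_inv_eq_mul]
    have h4 : 0 ≤ √(π / 2) * (t ^ (-ε) * exp (-t)) := by positivity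
    rw [h3] at h1
    have h5 := mul_le_mul_of_nonneg_left h2
      (by positivity : 0 ≤ t ^ (-ε) * 2 ^ ε * (1 / ε))
    linarith
  · have h1 := sqrt_mul_K0_le ht
    have hs : 0 < √t := sqrt_pos.2 ht
    have h2 : (√t)⁻¹ ≤ t ^ (-ε) := by
      rw [sqrt_eq_rpow, ← rpow_neg ht.le]
      exact rpow_le_rpow_of_exponent_le h (by linarith)
    have h4 : 0 ≤ 2 ^ ε * (1 / ε) * exp 1 * (t ^ (-ε) * exp (-t)) := by positivity
    calc K0 t = (√t)⁻¹ * exp (-t) * (√t * exp t * K0 t) := by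
          rw [Real.exp_neg]; field_simp
      _ ≤ t ^ (-ε) * exp (-t) * √(π / 2) := by
          have := K0_nonneg t
          gcongr
      _ ≤ _ := by linarith

lemma pi_inv_mul_sqrt_pos : 0 < 1 / π * √(π / 2) := by positivity

lemma tendsto_I0 : Tendsto (fun t => √t * exp (-t) * I0 t) atTop (𝓝 (1 / π * √(π / 2))) := by
  refine ((tendsto_cosInt 0).const_mul (1 / π)).congr fun t => ?_
  rw [I0_eq_s19]; ring

lemma tendsto_I1 : Tendsto (fun t => √t * exp (-t) * I1 t) atTop (𝓝 (1 / π * √(π / 2))) := by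
  refine ((tendsto_cosInt 1).const_mul (1 / π)).congr fun t => ?_
  rw [I1]; ring

lemma exists_sqrt_mul_I0_le : ∃ C, 0 < C ∧ ∀ t, 0 < t → √t * exp (-t) * I0 t ≤ C := by
  refine ⟨1 / π * ∫ v in Ioi (0:ℝ), exp (-(2 / π ^ 2) * v ^ 2), ?_, fun t ht => ?_⟩
  · rw [integral_gaussian_Ioi]; positivity
  · rw [I0_eq_s19]
    calc √t * exp (-t) * (1 / π * cosInt 0 t) = 1 / π * (√t * exp (-t) * cosInt 0 t) := by ring
      _ ≤ _ := by
        gcongr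
        exact (le_abs_self _).trans (cosInt_bound 0 ht)

/-! ### The Wronskian of `I₀` and `K₀` -/

/-- `t (I₁ K₀ + I₀ K₁)` has derivative zero on `(0, ∞)` and tends to `1` at the origin. -/
lemma bessel_wronskian {t : ℝ} (ht : 0 < t) : t * (I1 t * K0 t + I0 t * K1 t) = 1 := by
  set W : ℝ → ℝ := fun t => t * (I1 t * K0 t + I0 t * K1 t) with hW
  have hd : ∀ x ∈ Ioi (0:ℝ), HasDerivAt W 0 x := by
    intro x hx
    have hx0 : x ≠ 0 := ne_of_gt hx
    have := (hasDerivAt_id x).mul (((hasDerivAt_I1 hx).mul (hasDerivAt_K0 hx)).add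
      ((hasDerivAt_I0 x).mul (hasDerivAt_K1 hx)))
    convert! this using 1
    simp only [id, Pi.add_apply, Pi.mul_apply]
    field_simp
    ring
  have hconst : ∀ x ∈ Ioi (0:ℝ), W x = W t := by
    intro x hx
    exact (convex_Ioi (0:ℝ)).is_const_of_fderivWithin_eq_zero (𝕜 := ℝ)
      (fun y hy => (hd y hy).differentiableAt.differentiableWithinAt)
      (fun y hy => by
        have h1 := (hd y hy).hasDerivWithinAt (s := Ioi 0)
        have h2 := h1.hasFDerivWithinAt.fderivWithin ((isOpen_Ioi).uniqueDiffWithinAt hy)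
        rw [h2]; ext; simp) hx ht
  have hK : Tendsto (fun t => t * K0 t) (𝓝[>] 0) (𝓝 0) := by
    have hb : Tendsto (fun t : ℝ => √(π / 2) * √t) (𝓝[>] 0) (𝓝 0) := by
      have : Continuous fun t : ℝ => √(π / 2) * √t := by fun_prop
      simpa using (this.tendsto 0).mono_left nhdsWithin_le_nhds
    refine squeeze_zero' ?_ ?_ hb
    · filter_upwards [self_mem_nhdsWithin] with t ht
      exact mul_nonneg (le_of_lt ht) (K0_nonneg t)
    · filter_upwards [self_mem_nhdsWithin] with t (ht : 0 < t)
      have h1 := sqrt_mul_K0_le ht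
      have h2 : 1 ≤ exp t := one_le_exp ht.le
      calc t * K0 t = √t * (√t * 1 * K0 t) := by
            nth_rewrite 1 [← mul_self_sqrt ht.le]; ring
        _ ≤ √t * (√t * exp t * K0 t) := by
            have := K0_nonneg t
            gcongr
        _ ≤ √t * √(π / 2) := by gcongr
        _ = _ := mul_comm _ _
  have hI0 : Tendsto I0 (𝓝[>] 0) (𝓝 1) := by
    have h := (hasDerivAt_I0 0).continuousAt.tendsto.mono_left (nhdsWithin_le_nhds (s := Ioi 0))
    have h0 : I0 0 = 1 := by simp [I0, pi_ne_zero]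
    rwa [h0] at h
  have hI1 : Tendsto I1 (𝓝[>] 0) (𝓝 (I1 0)) := by
    have h := ((hasDerivAt_cosInt 1 0).const_mul (1 / π)).continuousAt.tendsto
    exact h.mono_left nhdsWithin_le_nhds
  have hlim : Tendsto W (𝓝[>] 0) (𝓝 (I1 0 * 0 + 1 * 1)) := by
    refine ((hI1.mul hK).add (hI0.mul tendsto_mul_K1)).congr fun t => ?_
    simp only [hW]; ring
  have hlim2 : Tendsto W (𝓝[>] 0) (𝓝 (W t)) := by
    refine tendsto_const_nhds.congr' ?_
    filter_upwards [self_mem_nhdsWithin] with x hx using (hconst x hx).symm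
  have := tendsto_nhds_unique hlim2 hlim
  simpa using this

/-! ### Moment functions and their differential system -/

/-- `f₀` or its derivative `f₁`, according to the parity of `l`. -/
noncomputable def bes (f0 f1 : ℝ → ℝ) (l : ℕ) (s : ℝ) : ℝ := if Even l then f0 s else f1 s

/-- The moment function `x ↦ ∫₀^∞ tˡ f_{l mod 2}(x t) φ(t) dt`, where `f₁` stands for the derivative
of `f₀`. -/
noncomputable def mom (f0 f1 φ : ℝ → ℝ) (l : ℕ) (x : ℝ) : ℝ :=
  ∫ t in Ioi (0:ℝ), t ^ l * bes f0 f1 l (x * t) * φ t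

/-- A solution `f₀` of the modified Bessel equation `f'' = f - f' / s` on `(0, ∞)` with derivative
`f₁`, of exponential growth rate at most `σ` and with at worst a logarithmic singularity at `0`. The
singularity is recorded as `O(s ^ (-1/4))`, which together with the exponent `-1/2` of `DecayWeight`
remains integrable. -/
structure BesselPair (f0 f1 : ℝ → ℝ) (σ : ℝ) : Prop where
  d0 : ∀ s, 0 < s → HasDerivAt f0 (f1 s) s
  d1 : ∀ s, 0 < s → HasDerivAt f1 (f0 s - f1 s / s) s
  nonneg : 0 ≤ σ
  bound : ∃ C, 0 < C ∧ ∀ s, 0 < s → |f0 s| ≤ C * ((s ^ (-(1 / 4) : ℝ) + s) * exp (σ * s)) ∧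
    |s * f1 s| ≤ C * ((s ^ (-(1 / 4) : ℝ) + s) * exp (σ * s))

/-- A weight on `(0, ∞)` with decay rate `c` at infinity and an integrable singularity at `0`. -/
structure DecayWeight (φ : ℝ → ℝ) (c : ℝ) : Prop where
  cont : ContinuousOn φ (Ioi 0)
  bound : ∃ C, 0 < C ∧ ∀ t, 0 < t → |φ t| ≤ C * (t ^ (-(1 / 2) : ℝ) * exp (-c * t))

lemma one_le_rpow_add {s : ℝ} (hs : 0 < s) : 1 ≤ s ^ (-(1 / 4) : ℝ) + s := by
  rcases le_total s 1 with h | h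
  · have := one_le_rpow_of_pos_of_le_one_of_nonpos hs h (by norm_num : (-(1 / 4) : ℝ) ≤ 0)
    linarith
  · have := rpow_pos_of_pos hs (-(1 / 4))
    linarith

lemma besselPair_I : BesselPair I0 I1 1 where
  d0 s _ := hasDerivAt_I0 s
  d1 s hs := hasDerivAt_I1 hs
  nonneg := zero_le_one
  bound := by
    refine ⟨1, one_pos, fun s hs => ?_⟩
    have h1 := one_le_rpow_add hs
    have h2 := I0_le_exp hs.le
    have h3 := rpow_pos_of_pos hs (-(1 / 4))
    rw [one_mul, one_mul]
    constructor
    · rw [abs_of_nonneg (I0_nonneg s)]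
      exact h2.trans (le_mul_of_one_le_left (exp_pos _).le h1)
    · rw [abs_mul, abs_of_pos hs]
      have := (abs_I1_le s).trans h2
      gcongr
      linarith

lemma besselPair_K : BesselPair K0 (fun s => -K1 s) 0 where
  d0 s hs := hasDerivAt_K0 hs
  d1 s hs := by
    have := (hasDerivAt_K1 hs).neg
    convert! this using 1
    ring
  nonneg := le_rfl
  bound := by
    obtain ⟨C, hC, h⟩ := exists_K0_le (ε := 1 / 4) (by norm_num) (by norm_num)
    refine ⟨C + 1, by positivity, fun s hs => ?_⟩
    have h1 := one_le_rpow_add hs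
    have h3 := rpow_pos_of_pos hs (-(1 / 4))
    rw [zero_mul, exp_zero, mul_one]
    constructor
    · rw [abs_of_nonneg (K0_nonneg s)]
      refine (h s hs).trans ?_
      have : exp (-s) ≤ 1 := exp_le_one_iff.2 (by linarith)
      calc C * (s ^ (-(1 / 4) : ℝ) * exp (-s)) ≤ (C + 1) * ((s ^ (-(1 / 4) : ℝ) + s) * 1) := by
            gcongr <;> linarith
        _ = _ := by ring
    · have h4 := mul_K1_le_one hs
      have h5 := K1_nonneg s
      rw [mul_neg, abs_neg, abs_of_nonneg (by positivity)]
      nlinarith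

/-- The power of `t` in the bound for `K₀` is chosen as `1 / (2m)`, so that `K₀ᵐ` contributes exactly
`t ^ (-1/2)`. -/
lemma decayWeight_IK (i m : ℕ) (hm : 1 ≤ m) :
    DecayWeight (fun t => I0 t ^ i * K0 t ^ m) (m - i) where
  cont t ht := (((hasDerivAt_I0 t).continuousAt.pow i).mul
    ((hasDerivAt_K0 ht).continuousAt.pow m)).continuousWithinAt
  bound := by
    have hm' : (1:ℝ) ≤ m := by exact_mod_cast hm
    obtain ⟨C, hC, h⟩ := exists_K0_le (ε := 1 / (2 * m)) (by positivity)
      (by rw [div_le_div_iff₀ (by positivity) (by norm_num)]; linarith)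
    refine ⟨C ^ m, by positivity, fun t ht => ?_⟩
    have h1 := I0_nonneg t
    have h2 := K0_nonneg t
    rw [abs_of_nonneg (by positivity)]
    calc I0 t ^ i * K0 t ^ m ≤ exp t ^ i * (C * (t ^ (-(1 / (2 * m)) : ℝ) * exp (-t))) ^ m := by
          gcongr
          · exact I0_le_exp ht.le
          · exact h t ht
      _ = C ^ m * (t ^ (-(1 / 2) : ℝ) * exp (-(m - i) * t)) := by
          rw [mul_pow, mul_pow, ← rpow_mul_natCast ht.le, ← exp_nat_mul, ← exp_nat_mul,
            show -(1 / (2 * (m:ℝ))) * m = -(1 / 2) by field_simp,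
            show -((m:ℝ) - i) * t = i * t + m * (-t) by ring, exp_add]
          ring

lemma BesselPair.abs_bes_le {f0 f1 : ℝ → ℝ} {σ : ℝ} (hf : BesselPair f0 f1 σ) :
    ∃ C, 0 < C ∧ ∀ (l : ℕ) (s : ℝ), 0 < s →
      |s ^ (l % 2) * bes f0 f1 l s| ≤ C * ((s ^ (-(1 / 4) : ℝ) + s) * exp (σ * s)) := by
  obtain ⟨C, hC, h⟩ := hf.bound
  refine ⟨C, hC, fun l s hs => ?_⟩
  unfold bes
  split_ifs with hl
  · rw [Nat.even_iff.1 hl, pow_zero, one_mul]; exact (h s hs).1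
  · rw [Nat.odd_iff.1 (Nat.not_even_iff_odd.1 hl), pow_one]; exact (h s hs).2

lemma integrableOn_rpow_mul_exp {p b : ℝ} (hp : -1 < p) (hb : 0 < b) :
    IntegrableOn (fun t : ℝ => t ^ p * exp (-b * t)) (Ioi 0) := by
  simpa using integrableOn_rpow_mul_exp_neg_mul_rpow hp one_pos hb

/-- Domination of the integrand of `mom`, uniform for `x` in a compact subinterval of `(0, 1]`. -/
lemma exists_dominating {f0 f1 φ : ℝ → ℝ} {σ c : ℝ} (hf : BesselPair f0 f1 σ)
    (hφ : DecayWeight φ c) {x0 x1 : ℝ} (h0 : 0 < x0) (h1 : x1 ≤ 1) (hc : σ * x1 < c) (l : ℕ) :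
    ∃ b : ℝ → ℝ, IntegrableOn b (Ioi 0) ∧ ∀ x ∈ Icc x0 x1, ∀ t, 0 < t →
      ‖t ^ l * bes f0 f1 l (x * t) * φ t‖ ≤ b t := by
  obtain ⟨C, hC, hfb⟩ := hf.abs_bes_le
  obtain ⟨C', hC', hφb⟩ := hφ.bound
  set p := l - l % 2 with hp
  have hlp : l = p + l % 2 := by have := Nat.mod_le l 2; omega
  refine ⟨fun t => C * C' * x0 ^ (-(1 / 4) : ℝ) / x0 *
    (t ^ ((p:ℝ) - 3 / 4) * exp (-(c - σ * x1) * t) +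
      t ^ ((p:ℝ) + 1 / 2) * exp (-(c - σ * x1) * t)), ?_, ?_⟩
  · refine Integrable.const_mul (Integrable.add ?_ ?_) _
    · exact integrableOn_rpow_mul_exp (by have : (0:ℝ) ≤ p := Nat.cast_nonneg p; linarith)
        (by linarith)
    · exact integrableOn_rpow_mul_exp (by have : (0:ℝ) ≤ p := Nat.cast_nonneg p; linarith)
        (by linarith)
  · rintro x ⟨hx0, hx1⟩ t ht
    have hx : 0 < x := h0.trans_le hx0
    have hx01 : x0 ≤ 1 := by linarith
    have hq : 1 ≤ x0 ^ (-(1 / 4) : ℝ) :=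
      one_le_rpow_of_pos_of_le_one_of_nonpos h0 hx01 (by norm_num)
    have hb := hfb l (x * t) (by positivity)
    have ht4 : 0 < t ^ (-(1 / 4) : ℝ) := rpow_pos_of_pos ht _
    have e1 : t ^ l * bes f0 f1 l (x * t) =
        t ^ p * (x ^ (l % 2))⁻¹ * ((x * t) ^ (l % 2) * bes f0 f1 l (x * t)) := by
      nth_rewrite 1 [hlp]
      rw [pow_add, mul_pow]
      field_simp
    have e2 : (x ^ (l % 2))⁻¹ ≤ x0⁻¹ := by
      rcases Nat.mod_two_eq_zero_or_one l with h | h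
      · rw [h, pow_zero, inv_one]; exact (one_le_inv₀ h0).2 hx01
      · rw [h, pow_one]; gcongr
    have e3 : (x * t) ^ (-(1 / 4) : ℝ) + x * t ≤ x0 ^ (-(1 / 4) : ℝ) * (t ^ (-(1 / 4) : ℝ) + t) := by
      have : x ^ (-(1 / 4) : ℝ) ≤ x0 ^ (-(1 / 4) : ℝ) :=
        rpow_le_rpow_of_nonpos h0 hx0 (by norm_num)
      rw [mul_rpow hx.le ht.le, mul_add]
      gcongr
      linarith
    have e4 : exp (σ * (x * t)) ≤ exp (σ * x1 * t) := by
      have := hf.nonneg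
      rw [← mul_assoc]; gcongr
    rw [Real.norm_eq_abs, abs_mul, e1, abs_mul, abs_of_pos (by positivity : 0 < t ^ p * (x ^ (l % 2))⁻¹)]
    calc t ^ p * (x ^ (l % 2))⁻¹ * |(x * t) ^ (l % 2) * bes f0 f1 l (x * t)| * |φ t|
        ≤ t ^ p * x0⁻¹ * (C * ((x0 ^ (-(1 / 4) : ℝ) * (t ^ (-(1 / 4) : ℝ) + t)) * exp (σ * x1 * t)))
          * (C' * (t ^ (-(1 / 2) : ℝ) * exp (-c * t))) := by
          gcongr
          · refine hb.trans ?_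
            gcongr
          · exact hφb t ht
      _ = _ := by
          have r1 : t ^ ((p:ℝ) - 3 / 4) = t ^ p * t ^ (-(1 / 4) : ℝ) * t ^ (-(1 / 2) : ℝ) := by
            rw [← rpow_natCast, ← rpow_add ht, ← rpow_add ht]; ring_nf
          have r2 : t ^ ((p:ℝ) + 1 / 2) = t ^ p * t * t ^ (-(1 / 2) : ℝ) := by
            nth_rewrite 3 [← rpow_one t]
            rw [← rpow_natCast, ← rpow_add ht, ← rpow_add ht]; ring_nf
          have r3 : exp (-(c - σ * x1) * t) = exp (σ * x1 * t) * exp (-c * t) := by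
            rw [← exp_add]; ring_nf
          beta_reduce
          rw [r1, r2, r3]; ring

lemma BesselPair.continuousAt_bes {f0 f1 : ℝ → ℝ} {σ : ℝ} (hf : BesselPair f0 f1 σ) (l : ℕ)
    {s : ℝ} (hs : 0 < s) : ContinuousAt (bes f0 f1 l) s := by
  unfold bes
  split_ifs
  · exact (hf.d0 s hs).continuousAt
  · exact (hf.d1 s hs).continuousAt

lemma aestronglyMeasurable_integrand {f0 f1 φ : ℝ → ℝ} {σ c : ℝ} (hf : BesselPair f0 f1 σ)
    (hφ : DecayWeight φ c) (l : ℕ) {x : ℝ} (hx : 0 < x) :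
    AEStronglyMeasurable (fun t => t ^ l * bes f0 f1 l (x * t) * φ t)
      (volume.restrict (Ioi (0:ℝ))) := by
  refine ContinuousOn.aestronglyMeasurable (fun t ht => ?_) measurableSet_Ioi
  have h1 : ContinuousAt (fun t => bes f0 f1 l (x * t)) t :=
    ContinuousAt.comp (f := fun t => x * t) (hf.continuousAt_bes l (mul_pos hx ht)) (by fun_prop)
  exact ((by fun_prop : ContinuousAt (fun t : ℝ => t ^ l) t).mul h1).continuousWithinAt.mul
    (hφ.cont t ht)

lemma integrableOn_integrand {f0 f1 φ : ℝ → ℝ} {σ c : ℝ} (hf : BesselPair f0 f1 σ)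
    (hφ : DecayWeight φ c) (l : ℕ) {x : ℝ} (hx : 0 < x) (hx1 : x ≤ 1) (hc : σ * x < c) :
    IntegrableOn (fun t => t ^ l * bes f0 f1 l (x * t) * φ t) (Ioi 0) := by
  obtain ⟨b, hb, hle⟩ := exists_dominating hf hφ hx hx1 hc l
  exact Integrable.mono' hb (aestronglyMeasurable_integrand hf hφ l hx)
    ((ae_restrict_iff' measurableSet_Ioi).2
      (Eventually.of_forall fun t ht => hle x ⟨le_rfl, le_rfl⟩ t ht))

/-- Differentiation under the integral sign; the Bessel equation expresses the derivative of `f₁` by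
`f₀` and `f₁`, hence the extra term for odd `l`. -/
lemma hasDerivAt_mom {f0 f1 φ : ℝ → ℝ} {σ c : ℝ} (hf : BesselPair f0 f1 σ)
    (hφ : DecayWeight φ c) (hc : σ ≤ c) (hc0 : 0 < c) (l : ℕ) {x : ℝ} (hx : x ∈ Ioo (0:ℝ) 1) :
    HasDerivAt (mom f0 f1 φ l)
      (mom f0 f1 φ (l + 1) x - (if Even l then 0 else mom f0 f1 φ l x / x)) x := by
  obtain ⟨hx0, hx1⟩ := hx
  set x1 := (x + 1) / 2 with hx1'
  have hc1 : σ * x1 < c := by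
    rcases hf.nonneg.eq_or_lt with h | h
    · rw [← h]; simpa using hc0
    · nlinarith
  obtain ⟨b, hb, hble⟩ := exists_dominating hf hφ (half_pos hx0) (by linarith) hc1 l
  obtain ⟨b', hb', hble'⟩ := exists_dominating hf hφ (half_pos hx0) (by linarith) hc1 (l + 1)
  have hcx : σ * x < c := lt_of_le_of_lt (mul_le_mul_of_nonneg_left (by linarith) hf.nonneg) hc1
  have hi := integrableOn_integrand hf hφ l hx0 hx1.le hcx
  have hi' := integrableOn_integrand hf hφ (l + 1) hx0 hx1.le hcx
  have key := (hasDerivAt_integral_of_dominated_loc_of_deriv_le (μ := volume.restrict (Ioi (0:ℝ)))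
    (F := fun x t => t ^ l * bes f0 f1 l (x * t) * φ t)
    (F' := fun x t => t ^ (l + 1) * bes f0 f1 (l + 1) (x * t) * φ t
      - (if Even l then 0 else 1) * x⁻¹ * (t ^ l * bes f0 f1 l (x * t) * φ t))
    (x₀ := x) (s := Ioo (x / 2) x1) (bound := fun t => b' t + (x / 2)⁻¹ * b t)
    (Ioo_mem_nhds (by linarith) (by linarith)) ?_ hi
    ((hi'.sub (hi.const_mul _)).aestronglyMeasurable) ?_ (hb'.add (hb.const_mul _)) ?_).2
  · convert! key using 1
    have : ∫ t in Ioi (0:ℝ), (t ^ (l + 1) * bes f0 f1 (l + 1) (x * t) * φ t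
        - (if Even l then 0 else 1) * x⁻¹ * (t ^ l * bes f0 f1 l (x * t) * φ t)) =
        mom f0 f1 φ (l + 1) x - (if Even l then 0 else 1) * x⁻¹ * mom f0 f1 φ l x := by
      rw [integral_sub hi' (hi.const_mul _), integral_const_mul]; rfl
    rw [this]
    split_ifs <;> simp [div_eq_inv_mul]
  · filter_upwards [Ioi_mem_nhds hx0] with y hy using aestronglyMeasurable_integrand hf hφ l hy
  · refine (ae_restrict_iff' measurableSet_Ioi).2 (Eventually.of_forall fun t ht y hy => ?_)
    have hy0 : 0 < y := (half_pos hx0).trans hy.1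
    have h1 := hble y ⟨hy.1.le, hy.2.le⟩ t ht
    have h2 := hble' y ⟨hy.1.le, hy.2.le⟩ t ht
    refine (norm_sub_le _ _).trans (add_le_add h2 ?_)
    rw [norm_mul]
    have h3 : ‖(if Even l then (0:ℝ) else 1) * y⁻¹‖ ≤ (x / 2)⁻¹ := by
      rw [norm_mul, norm_inv, Real.norm_eq_abs y, abs_of_pos hy0]
      have : y⁻¹ ≤ (x / 2)⁻¹ := inv_anti₀ (half_pos hx0) hy.1.le
      split_ifs
      · simp only [norm_zero, zero_mul]; positivity
      · simpa using this
    gcongr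
  · refine (ae_restrict_iff' measurableSet_Ioi).2 (Eventually.of_forall fun t ht y hy => ?_)
    have hy0 : 0 < y := (half_pos hx0).trans hy.1
    have ht : 0 < t := ht
    have hlin : HasDerivAt (fun y : ℝ => y * t) t y := by simpa using (hasDerivAt_id y).mul_const t
    have hyt : 0 < y * t := mul_pos hy0 ht
    unfold bes
    by_cases hl : Even l
    · have hl' : ¬ Even (l + 1) := by rw [Nat.even_add_one]; simpa using hl
      simp only [hl, hl', if_true, if_false]
      have := ((HasDerivAt.comp y (hf.d0 _ hyt) hlin).const_mul (t ^ l)).mul_const (φ t)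
      convert! this using 1
      ring
    · have hl' : Even (l + 1) := by rw [Nat.even_add_one]; exact hl
      simp only [hl, hl', if_true, if_false]
      have := ((HasDerivAt.comp y (hf.d1 _ hyt) hlin).const_mul (t ^ l)).mul_const (φ t)
      convert! this using 1
      field_simp
      ring

lemma tendsto_mom {f0 f1 φ : ℝ → ℝ} {σ c : ℝ} (hf : BesselPair f0 f1 σ)
    (hφ : DecayWeight φ c) (hc : σ < c) (l : ℕ) :
    Tendsto (mom f0 f1 φ l) (𝓝[Ioo 0 1] 1) (𝓝 (mom f0 f1 φ l 1)) := by
  obtain ⟨b, hb, hble⟩ := exists_dominating hf hφ (x0 := 1 / 2) (x1 := 1) (by norm_num) le_rfl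
    (by simpa using hc) l
  have hev : ∀ᶠ x : ℝ in 𝓝[Ioo 0 1] 1, x ∈ Icc (1 / 2 : ℝ) 1 := by
    filter_upwards [self_mem_nhdsWithin,
      mem_nhdsWithin_of_mem_nhds (Ioi_mem_nhds (by norm_num : (1 / 2 : ℝ) < 1))] with x hx hx2
    exact ⟨le_of_lt hx2, hx.2.le⟩
  refine tendsto_integral_filter_of_dominated_convergence b ?_ ?_ hb ?_
  · filter_upwards [hev] with x hx
    exact aestronglyMeasurable_integrand hf hφ l (by linarith [hx.1])
  · filter_upwards [hev] with x hx
    exact (ae_restrict_iff' measurableSet_Ioi).2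
      (Eventually.of_forall fun t ht => hble x hx t ht)
  · refine (ae_restrict_iff' measurableSet_Ioi).2 (Eventually.of_forall fun t ht => ?_)
    have h1 : ContinuousAt (fun x => bes f0 f1 l (x * t)) 1 :=
      ContinuousAt.comp (f := fun x => x * t)
        (hf.continuousAt_bes l (by simpa using ht)) (by fun_prop)
    exact ((h1.tendsto.mono_left nhdsWithin_le_nhds).const_mul (t ^ l)).mul_const (φ t)

/-! ### From derivatives to moment functions -/

/-- The coefficients of the unipotent triangular change of basis
`Dˡ h₀ = ∑ⱼ a(l, j) x^(j - l) hⱼ` between the derivatives of `h₀ = mom f₀ f₁ φ 0` and the moment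
functions `hⱼ = mom f₀ f₁ φ j`. -/
noncomputable def coef : ℕ → ℕ → ℝ
  | 0, j => if j = 0 then 1 else 0
  | l + 1, j => ((j:ℝ) - l) * coef l j - (if Even j then 0 else coef l j)
      + (if j = 0 then 0 else coef l (j - 1))

lemma coef_eq_zero {l j : ℕ} (h : l < j) : coef l j = 0 := by
  induction l generalizing j with
  | zero => simp [coef, h.ne']
  | succ l ih =>
    rw [coef, ih (by omega), ih (by omega : l < j - 1)]
    simp

lemma coef_self (l : ℕ) : coef l l = 1 := by
  induction l with
  | zero => simp [coef]
  | succ l ih =>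
    rw [coef, coef_eq_zero (Nat.lt_succ_self l)]
    simp [ih]

lemma iteratedDeriv_mom {f0 f1 φ : ℝ → ℝ} {σ c : ℝ} (hf : BesselPair f0 f1 σ)
    (hφ : DecayWeight φ c) (hc : σ ≤ c) (hc0 : 0 < c) (n l : ℕ) (hl : l < n) {x : ℝ}
    (hx : x ∈ Ioo (0:ℝ) 1) :
    iteratedDeriv l (mom f0 f1 φ 0) x =
      ∑ j ∈ Finset.range n, coef l j * x ^ ((j:ℤ) - l) * mom f0 f1 φ j x := by
  induction l generalizing x with
  | zero =>
    rw [Finset.sum_eq_single 0]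
    · simp [coef]
    · intro j _ hj; simp [coef, hj]
    · intro h; simp at h; omega
  | succ l ih =>
    obtain ⟨m, rfl⟩ : ∃ m, n = m + 1 := ⟨n - 1, by omega⟩
    have hx0 : x ≠ 0 := ne_of_gt hx.1
    have hev : iteratedDeriv l (mom f0 f1 φ 0) =ᶠ[𝓝 x] fun x =>
        ∑ j ∈ Finset.range (m + 1), coef l j * x ^ ((j:ℤ) - l) * mom f0 f1 φ j x := by
      filter_upwards [Ioo_mem_nhds hx.1 hx.2] with y hy using ih (by omega) hy
    have hd : HasDerivAt (fun x =>
        ∑ j ∈ Finset.range (m + 1), coef l j * x ^ ((j:ℤ) - l) * mom f0 f1 φ j x)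
        (∑ j ∈ Finset.range (m + 1),
          (coef l j * ((((j:ℤ) - l : ℤ) : ℝ) * x ^ ((j:ℤ) - l - 1)) * mom f0 f1 φ j x +
          coef l j * x ^ ((j:ℤ) - l) *
            (mom f0 f1 φ (j + 1) x - (if Even j then 0 else mom f0 f1 φ j x / x)))) x := by
      refine HasDerivAt.fun_sum fun j _ => ?_
      exact ((hasDerivAt_zpow _ x (Or.inl hx0)).const_mul _).mul
        (hasDerivAt_mom hf hφ hc hc0 j hx)
    rw [iteratedDeriv_succ, hev.deriv_eq, hd.deriv]
    have hshift : ∑ j ∈ Finset.range (m + 1), coef l j * x ^ ((j:ℤ) - l) * mom f0 f1 φ (j + 1) x =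
        ∑ j ∈ Finset.range (m + 1), (if j = 0 then 0 else coef l (j - 1)) *
          x ^ ((j:ℤ) - l - 1) * mom f0 f1 φ j x := by
      rw [Finset.sum_range_succ, coef_eq_zero (by omega : l < m), Finset.sum_range_succ']
      simp only [zero_mul, add_zero, if_true, Nat.add_sub_cancel, Nat.add_eq_zero_iff,
        one_ne_zero, and_false, if_false]
      refine Finset.sum_congr rfl fun j _ => ?_
      congr 3
      push_cast; ring
    have hsplit : ∀ j ∈ Finset.range (m + 1),
        (coef l j * ((((j:ℤ) - l : ℤ) : ℝ) * x ^ ((j:ℤ) - l - 1)) * mom f0 f1 φ j x +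
          coef l j * x ^ ((j:ℤ) - l) *
            (mom f0 f1 φ (j + 1) x - (if Even j then 0 else mom f0 f1 φ j x / x))) =
        (((j:ℝ) - l) * coef l j - (if Even j then 0 else coef l j)) * x ^ ((j:ℤ) - l - 1) *
          mom f0 f1 φ j x + coef l j * x ^ ((j:ℤ) - l) * mom f0 f1 φ (j + 1) x := by
      intro j _
      have hz : x ^ ((j:ℤ) - l) = x ^ ((j:ℤ) - l - 1) * x := by
        rw [← zpow_add_one₀ hx0]; congr 1; ring
      rw [hz]
      push_cast
      split_ifs
      · ring
      · field_simp
        ring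
    rw [Finset.sum_congr rfl hsplit, Finset.sum_add_distrib, hshift, ← Finset.sum_add_distrib]
    refine Finset.sum_congr rfl fun j _ => ?_
    rw [coef, show ((j:ℤ) - ((l + 1 : ℕ) : ℤ)) = (j:ℤ) - l - 1 by push_cast; ring]
    ring

/-! ### The singular column -/

lemma integral_pow_mul_exp (m : ℕ) {y : ℝ} (hy : 0 < y) :
    ∫ t in Ioi (0:ℝ), t ^ m * exp (-y * t) = m.factorial / y ^ (m + 1) := by
  have h := Real.integral_rpow_mul_exp_neg_mul_Ioi (a := m + 1) (by positivity) hy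
  rw [Real.Gamma_nat_eq_factorial] at h
  simp only [add_sub_cancel_right, rpow_natCast] at h
  simp only [neg_mul]
  rw [h, ← Nat.cast_add_one, rpow_natCast, div_pow, one_pow]
  ring

lemma integrableOn_pow_mul_exp (m : ℕ) {y : ℝ} (hy : 0 < y) :
    IntegrableOn (fun t : ℝ => t ^ m * exp (-y * t)) (Ioi 0) := by
  have := integrableOn_rpow_mul_exp (p := m) (by have : (0:ℝ) ≤ m := Nat.cast_nonneg m; linarith) hy
  simpa using this

/-- The bounded factor `(√t e⁻ᵗ I₀(t))ⁿ (√t eᵗ K₀(t))ⁿ⁺¹` of the weight `I₀ⁿ K₀ⁿ⁺¹`. -/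
noncomputable def critQ (n : ℕ) (t : ℝ) : ℝ :=
  (√t * exp (-t) * I0 t) ^ n * (√t * exp t * K0 t) ^ (n + 1)

lemma exists_critQ_le (n : ℕ) : ∃ C, 0 < C ∧ ∀ t, 0 < t → |critQ n t| ≤ C := by
  obtain ⟨C, hC, h⟩ := exists_sqrt_mul_I0_le
  refine ⟨C ^ n * √(π / 2) ^ (n + 1), by positivity, fun t ht => ?_⟩
  have h1 := I0_nonneg t
  have h2 := K0_nonneg t
  rw [critQ, abs_of_nonneg (by positivity)]
  gcongr
  · exact h t ht
  · exact sqrt_mul_K0_le ht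

/-- Factorization of the integrand of the critical column into a Gamma density and bounded
factors. -/
lemma crit_factor (n : ℕ) (f : ℝ → ℝ) {x t : ℝ} (hx : 0 < x) (ht : 0 < t) :
    t ^ (2 * n + 1) * f (x * t) * (I0 t ^ n * K0 t ^ (n + 1)) =
      (√x)⁻¹ * (t ^ n * exp (-(1 - x) * t) *
        ((√(x * t) * exp (-(x * t)) * f (x * t)) * critQ n t)) := by
  have hsx : 0 < √x := sqrt_pos.2 hx
  have e1 : t ^ (n + 1) = √t * √t ^ n * √t ^ (n + 1) := by
    nth_rewrite 1 [← mul_self_sqrt ht.le]; ring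
  have e2 : exp (-(1 - x) * t) * exp (-(x * t)) * (exp (-t) ^ n * exp t ^ (n + 1)) = 1 := by
    rw [← exp_nat_mul, ← exp_nat_mul, ← exp_add, ← exp_add, ← exp_add, exp_eq_one_iff]
    push_cast; ring
  have e3 : t ^ (2 * n + 1) = t ^ n * t ^ (n + 1) := by rw [← pow_add]; congr 1; ring
  rw [critQ, sqrt_mul hx.le, e3, e1]
  simp only [mul_pow]
  generalize exp (-(1 - x) * t) = a at *
  generalize exp (-(x * t)) = b at *
  field_simp
  linear_combination (-(I0 t ^ n * K0 t ^ (n + 1) * f (x * t))) * e2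

/-- The last entry of the critical column. After `t = s / (1 - x)` the weighted integral tends to
`∫ sⁿ e⁻ˢ ds = n!` times the product of the limits of the bounded factors, each pair of which (one
for `I`, one for `K₀`) contributes `1 / 2`. -/
lemma tendsto_crit (n : ℕ) :
    Tendsto (fun x => (1 - x) ^ (n + 1) *
        mom I0 I1 (fun t => I0 t ^ n * K0 t ^ (n + 1)) (2 * n + 1) x)
      (𝓝[Ioo 0 1] 1) (𝓝 ((n.factorial : ℝ) / 2 ^ (n + 1))) := by
  set α := 1 / π * √(π / 2) with hα
  set β := √(π / 2) with hβ
  have hαβ : α * β = 1 / 2 := by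
    rw [hα, mul_assoc, mul_self_sqrt (by positivity)]; field_simp
  set P : ℝ → ℝ := fun s => √s * exp (-s) * I1 s with hP
  obtain ⟨C, hC, hI⟩ := exists_sqrt_mul_I0_le
  obtain ⟨C', hC', hQ⟩ := exists_critQ_le n
  have hPb : ∀ s, 0 < s → |P s| ≤ C := by
    intro s hs
    refine le_trans ?_ (hI s hs)
    rw [hP]; beta_reduce
    rw [abs_mul, abs_of_pos (by positivity : 0 < √s * exp (-s))]
    gcongr
    exact abs_I1_le s
  have hPc : Continuous P := by
    have : Continuous I1 := continuous_iff_continuousAt.2 fun s =>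
      ((hasDerivAt_cosInt 1 s).const_mul (1 / π)).continuousAt
    fun_prop
  have hQc : ContinuousOn (critQ n) (Ioi 0) := by
    intro s hs
    have h1 := (hasDerivAt_I0 s).continuousAt
    have h2 := (hasDerivAt_K0 hs).continuousAt
    unfold critQ
    exact ContinuousAt.continuousWithinAt (by fun_prop)
  -- the rescaled integral, after `t = s / (1 - x)`
  have hscale : ∀ x ∈ Ioo (0:ℝ) 1, (1 - x) ^ (n + 1) *
      mom I0 I1 (fun t => I0 t ^ n * K0 t ^ (n + 1)) (2 * n + 1) x =
      (√x)⁻¹ * ∫ s in Ioi (0:ℝ), s ^ n * exp (-1 * s) *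
        (P (x * ((1 - x)⁻¹ * s)) * critQ n ((1 - x)⁻¹ * s)) := by
    intro x hx
    have hy : 0 < 1 - x := by linarith [hx.2]
    have h1 : mom I0 I1 (fun t => I0 t ^ n * K0 t ^ (n + 1)) (2 * n + 1) x =
        (√x)⁻¹ * ∫ t in Ioi (0:ℝ), t ^ n * exp (-(1 - x) * t) * (P (x * t) * critQ n t) := by
      rw [mom, ← integral_const_mul]
      refine setIntegral_congr_fun measurableSet_Ioi fun t ht => ?_
      have hodd : ¬ Even (2 * n + 1) := by simp
      simp only [bes, hodd, if_false]
      exact crit_factor n I1 hx.1 ht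
    have h2 := integral_comp_mul_left_Ioi
      (fun t => t ^ n * exp (-(1 - x) * t) * (P (x * t) * critQ n t)) 0 (inv_pos.2 hy)
    simp only [mul_zero, inv_inv, smul_eq_mul] at h2
    rw [h1, pow_succ, mul_left_comm, mul_assoc, ← h2, ← integral_const_mul]
    congr 1
    refine setIntegral_congr_fun measurableSet_Ioi fun s _ => ?_
    have e : -(1 - x) * ((1 - x)⁻¹ * s) = -1 * s := by field_simp
    simp only [e, mul_pow, inv_pow]
    field_simp
  have hinv : Tendsto (fun x : ℝ => (1 - x)⁻¹) (𝓝[Ioo 0 1] 1) atTop := by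
    refine tendsto_inv_nhdsGT_zero.comp (tendsto_nhdsWithin_iff.2 ⟨?_, ?_⟩)
    · have : Continuous fun x : ℝ => 1 - x := by fun_prop
      simpa using (this.tendsto 1).mono_left (nhdsWithin_le_nhds (s := Ioo 0 1))
    · filter_upwards [self_mem_nhdsWithin] with x hx
      exact sub_pos.2 hx.2
  have hid : Tendsto (fun x : ℝ => x) (𝓝[Ioo 0 1] 1) (𝓝 1) := nhdsWithin_le_nhds
  have hlim : Tendsto (fun x : ℝ => ∫ s in Ioi (0:ℝ), s ^ n * exp (-1 * s) *
        (P (x * ((1 - x)⁻¹ * s)) * critQ n ((1 - x)⁻¹ * s))) (𝓝[Ioo 0 1] 1)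
      (𝓝 (∫ s in Ioi (0:ℝ), s ^ n * exp (-1 * s) * (α * (α ^ n * β ^ (n + 1))))) := by
    refine tendsto_integral_filter_of_dominated_convergence
      (fun s => s ^ n * exp (-1 * s) * (C * C')) ?_ ?_
      ((integrableOn_pow_mul_exp n one_pos).mul_const _) ?_
    · filter_upwards [self_mem_nhdsWithin] with x hx
      have hy : 0 < 1 - x := by linarith [hx.2]
      refine ContinuousOn.aestronglyMeasurable ?_ measurableSet_Ioi
      refine ContinuousOn.mul (by fun_prop) (ContinuousOn.mul (by fun_prop) ?_)
      exact hQc.comp (by fun_prop) fun s hs => mul_pos (inv_pos.2 hy) hs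
    · filter_upwards [self_mem_nhdsWithin] with x hx
      have hy : 0 < 1 - x := by linarith [hx.2]
      refine (ae_restrict_iff' measurableSet_Ioi).2 (Eventually.of_forall fun s hs => ?_)
      have hs : 0 < s := hs
      have hx0 := hx.1
      rw [norm_mul, norm_mul (P _), Real.norm_eq_abs, Real.norm_eq_abs, Real.norm_eq_abs,
        abs_of_pos (by positivity : 0 < s ^ n * exp (-1 * s))]
      gcongr
      · exact hPb _ (by positivity)
      · exact hQ _ (by positivity)
    · refine (ae_restrict_iff' measurableSet_Ioi).2 (Eventually.of_forall fun s hs => ?_)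
      have h1 : Tendsto (fun x : ℝ => (1 - x)⁻¹ * s) (𝓝[Ioo 0 1] 1) atTop :=
        hinv.atTop_mul_const hs
      have h2 : Tendsto (fun x : ℝ => x * ((1 - x)⁻¹ * s)) (𝓝[Ioo 0 1] 1) atTop :=
        hid.pos_mul_atTop one_pos h1
      exact ((tendsto_I1.comp h2).mul (((tendsto_I0.comp h1).pow n).mul
        ((tendsto_K0.comp h1).pow (n + 1)))).const_mul _
  have hval : (√(1:ℝ))⁻¹ * ∫ s in Ioi (0:ℝ), s ^ n * exp (-1 * s) * (α * (α ^ n * β ^ (n + 1))) =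
      (n.factorial : ℝ) / 2 ^ (n + 1) := by
    rw [integral_mul_const, integral_pow_mul_exp n one_pos]
    have : α * (α ^ n * β ^ (n + 1)) = (α * β) ^ (n + 1) := by rw [mul_pow]; ring
    rw [this, hαβ, sqrt_one, one_div, inv_pow]
    simp [div_eq_mul_inv]
  rw [← hval]
  refine Tendsto.congr' ?_ (((hid.sqrt).inv₀ (by simp)).mul hlim)
  filter_upwards [self_mem_nhdsWithin] with x hx using (hscale x hx).symm

lemma abs_bes_I_le (l : ℕ) (s : ℝ) : |bes I0 I1 l s| ≤ I0 s := by
  unfold bes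
  split_ifs
  · exact (abs_of_nonneg (I0_nonneg s)).le
  · exact abs_I1_le s

/-- The entries of the critical column above the last one are `O((1 - x)^(1 - r))`. -/
lemma tendsto_crit_zero (m l : ℕ) (hl : l < 2 * (m + 1) + 1) :
    Tendsto (fun x => (1 - x) ^ (m + 2) *
        mom I0 I1 (fun t => I0 t ^ (m + 1) * K0 t ^ (m + 2)) l x)
      (𝓝[Ioo 0 1] 1) (𝓝 0) := by
  obtain ⟨C, hC, hI⟩ := exists_sqrt_mul_I0_le
  obtain ⟨C', hC', hQ⟩ := exists_critQ_le (m + 1)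
  obtain ⟨D, hD, hφ⟩ := (decayWeight_IK (m + 1) (m + 2) (by omega)).bound
  have hc : ((m + 2 : ℕ) : ℝ) - ((m + 1 : ℕ) : ℝ) = 1 := by push_cast; ring
  rw [hc] at hφ
  have hpt : ∀ x ∈ Ioo (1 / 2 : ℝ) 1, ∀ t, 0 < t →
      ‖t ^ l * bes I0 I1 l (x * t) * (I0 t ^ (m + 1) * K0 t ^ (m + 2))‖ ≤
        D * exp 1 * (t ^ (-(1 / 2) : ℝ) * exp (-1 * t)) +
          2 * C * C' * (t ^ m * exp (-(1 - x) * t)) := by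
    rintro x ⟨hx0, hx1⟩ t ht
    have hx : 0 < x := by linarith
    have hI0 := I0_nonneg t
    have hK0 := K0_nonneg t
    have hb := abs_bes_I_le l (x * t)
    have hφ0 : 0 ≤ I0 t ^ (m + 1) * K0 t ^ (m + 2) := by positivity
    rw [Real.norm_eq_abs, abs_mul, abs_mul, abs_of_nonneg hφ0, abs_of_pos (pow_pos ht l)]
    rcases le_total t 1 with h | h
    · have h1 : I0 (x * t) ≤ exp t :=
        (I0_le_exp (by positivity)).trans (exp_le_exp.2 (by nlinarith))
      have h2 := (le_abs_self _).trans (hφ t ht)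
      have h3 : exp t ≤ exp 1 := exp_le_exp.2 h
      have h4 : 0 ≤ 2 * C * C' * (t ^ m * exp (-(1 - x) * t)) := by positivity
      calc t ^ l * |bes I0 I1 l (x * t)| * (I0 t ^ (m + 1) * K0 t ^ (m + 2))
          ≤ 1 * exp 1 * (D * (t ^ (-(1 / 2) : ℝ) * exp (-1 * t))) := by
            gcongr
            · exact pow_le_one₀ ht.le h
            · exact hb.trans (h1.trans h3)
        _ ≤ _ := by linarith
    · have h4 : 0 ≤ D * exp 1 * (t ^ (-(1 / 2) : ℝ) * exp (-1 * t)) := by positivity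
      have h5 := crit_factor (m + 1) I0 hx ht
      have h6 : t ^ (2 * (m + 1) + 1) = t * t ^ (2 * (m + 1)) := pow_succ' _ _
      have h7 : (√x)⁻¹ ≤ 2 := by
        rw [inv_le_comm₀ (sqrt_pos.2 hx) two_pos]
        refine le_sqrt_of_sq_le ?_
        norm_num; linarith
      have hI0' := I0_nonneg (x * t)
      have hQ0 : 0 ≤ critQ (m + 1) t := by unfold critQ; positivity
      calc t ^ l * |bes I0 I1 l (x * t)| * (I0 t ^ (m + 1) * K0 t ^ (m + 2))
          ≤ t ^ (2 * (m + 1)) * I0 (x * t) * (I0 t ^ (m + 1) * K0 t ^ (m + 2)) := by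
            gcongr
            omega
        _ = (√x)⁻¹ * (t ^ m * exp (-(1 - x) * t) *
              ((√(x * t) * exp (-(x * t)) * I0 (x * t)) * critQ (m + 1) t)) := by
            rw [h6, pow_succ t m] at h5
            refine mul_left_cancel₀ ht.ne' ?_
            linear_combination h5
        _ ≤ 2 * (t ^ m * exp (-(1 - x) * t) * (C * C')) := by
            gcongr
            · exact hI _ (by positivity)
            · exact (le_abs_self _).trans (hQ t ht)
        _ ≤ _ := by linarith
  set J := ∫ t in Ioi (0:ℝ), t ^ (-(1 / 2) : ℝ) * exp (-1 * t) with hJ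
  have hbd : ∀ x ∈ Ioo (1 / 2 : ℝ) 1,
      ‖(1 - x) ^ (m + 2) * mom I0 I1 (fun t => I0 t ^ (m + 1) * K0 t ^ (m + 2)) l x‖ ≤
        D * exp 1 * J * (1 - x) ^ (m + 2) + 2 * C * C' * m.factorial * (1 - x) := by
    intro x hx
    have hy : 0 < 1 - x := by linarith [hx.2]
    have i1 : IntegrableOn (fun t : ℝ => D * exp 1 * (t ^ (-(1 / 2) : ℝ) * exp (-1 * t))) (Ioi 0) :=
      (integrableOn_rpow_mul_exp (by norm_num) one_pos).const_mul _
    have i2 : IntegrableOn (fun t : ℝ => 2 * C * C' * (t ^ m * exp (-(1 - x) * t))) (Ioi 0) :=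
      (integrableOn_pow_mul_exp m hy).const_mul _
    have h := norm_integral_le_of_norm_le (i1.add i2)
      ((ae_restrict_iff' measurableSet_Ioi).2 (Eventually.of_forall (hpt x hx)))
    simp only [Pi.add_apply] at h
    rw [integral_add i1 i2, integral_const_mul, integral_const_mul, integral_pow_mul_exp m hy,
      ← hJ] at h
    rw [norm_mul, Real.norm_eq_abs ((1 - x) ^ (m + 2)), abs_of_pos (pow_pos hy _)]
    calc (1 - x) ^ (m + 2) * ‖mom I0 I1 (fun t => I0 t ^ (m + 1) * K0 t ^ (m + 2)) l x‖
        ≤ (1 - x) ^ (m + 2) * (D * exp 1 * J + 2 * C * C' * (m.factorial / (1 - x) ^ (m + 1))) := by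
          gcongr
          exact h
      _ = _ := by field_simp; ring
  have hlim : Tendsto (fun x : ℝ => D * exp 1 * J * (1 - x) ^ (m + 2) +
      2 * C * C' * m.factorial * (1 - x)) (𝓝[Ioo 0 1] 1) (𝓝 0) := by
    have : Continuous fun x : ℝ => D * exp 1 * J * (1 - x) ^ (m + 2) +
      2 * C * C' * m.factorial * (1 - x) := by fun_prop
    simpa using (this.tendsto 1).mono_left (nhdsWithin_le_nhds (s := Ioo 0 1))
  refine squeeze_zero_norm' ?_ hlim
  filter_upwards [self_mem_nhdsWithin,
    mem_nhdsWithin_of_mem_nhds (Ioi_mem_nhds (by norm_num : (1 / 2 : ℝ) < 1))] with x hx hx2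
  exact hbd x ⟨hx2, hx.2⟩

/-! ### The Wronskian as a determinant of moments -/

/-- The integrals `∫ t^l f_l(xt) φ_i(t) dt` attached to the `i`-th function: the `l`-th derivative
of `g r i` is a combination of those of index at most `l`. -/
noncomputable def colMom (r i l : ℕ) (x : ℝ) : ℝ :=
  if i < r then mom I0 I1 (fun t => I0 t ^ i * K0 t ^ (2 * r - 1 - i)) l x
  else mom K0 (fun s => -K1 s) (fun t => I0 t ^ (i - r) * K0 t ^ (3 * r - 1 - i)) l x

lemma g_eq_colMom (r : ℕ) (i : Fin (2 * r)) : g r i = colMom r i 0 := by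
  funext x
  unfold g colMom mom
  split_ifs <;> · congr 1; funext t; simp [bes]; ring

lemma iteratedDeriv_g {r : ℕ} (i l : Fin (2 * r)) {x : ℝ} (hx : x ∈ Ioo (0:ℝ) 1) :
    iteratedDeriv l (g r i) x =
      ∑ j : Fin (2 * r), coef l j * x ^ ((j : ℤ) - (l : ℤ)) * colMom r i j x := by
  have hi := i.2
  rw [g_eq_colMom, Fin.sum_univ_eq_sum_range
    (fun j => coef l j * x ^ ((j : ℤ) - ((l : ℕ) : ℤ)) * colMom r i j x)]
  rcases lt_or_ge (i : ℕ) r with h | h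
  · have hc : ((2 * r - 1 - i : ℕ) : ℝ) - (i : ℕ) ≥ 1 := by
      have : (i : ℕ) + 1 ≤ 2 * r - 1 - i := by omega
      have : (((i : ℕ) + 1 : ℕ) : ℝ) ≤ ((2 * r - 1 - i : ℕ) : ℝ) := by exact_mod_cast this
      push_cast at this; linarith
    have e : ∀ l, colMom r i l = mom I0 I1 (fun t => I0 t ^ (i : ℕ) * K0 t ^ (2 * r - 1 - i)) l := by
      intro l; funext x; simp [colMom, h]
    simp only [e]
    exact iteratedDeriv_mom besselPair_I (decayWeight_IK i (2 * r - 1 - i) (by omega)) hc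
      (by linarith) _ _ l.2 hx
  · have hc : (0:ℝ) < ((3 * r - 1 - i : ℕ) : ℝ) - (i - r : ℕ) := by
      rw [sub_pos]; exact_mod_cast (by omega)
    have e : ∀ l, colMom r i l =
        mom K0 (fun s => -K1 s) (fun t => I0 t ^ (i - r : ℕ) * K0 t ^ (3 * r - 1 - i)) l := by
      intro l; funext x; simp [colMom, h.not_gt]
    simp only [e]
    exact iteratedDeriv_mom besselPair_K (decayWeight_IK (i - r) (3 * r - 1 - i) (by omega)) hc.le
      hc _ _ l.2 hx

/-- The derivatives and the moments differ by a lower triangular matrix with unit diagonal. -/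
lemma w_eq_det {r : ℕ} {x : ℝ} (hx : x ∈ Ioo (0:ℝ) 1) :
    w r x = Matrix.det (Matrix.of fun l i : Fin (2 * r) => colMom r i l x) := by
  set A : Matrix (Fin (2 * r)) (Fin (2 * r)) ℝ :=
    Matrix.of fun l j => coef l j * x ^ (((j : ℕ) : ℤ) - ((l : ℕ) : ℤ)) with hA
  have hdet : A.det = 1 := by
    rw [Matrix.det_of_isLowerTriangular]
    · simp [hA, coef_self]
    · intro l j hlj
      have : (l : ℕ) < j := hlj
      simp [hA, coef_eq_zero this]
  rw [w, ← one_mul (Matrix.det (Matrix.of fun l i : Fin (2 * r) => colMom r i l x)), ← hdet,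
    ← Matrix.det_mul]
  congr 1
  ext l i
  simp [Matrix.mul_apply, hA, iteratedDeriv_g i l hx]

/-- The limit, as `x → 1⁻`, of the moment matrix with its column `r - 1` scaled by `(1 - x)^r`. -/
noncomputable def limMat (r : ℕ) : Matrix (Fin (2 * r)) (Fin (2 * r)) ℝ :=
  Matrix.of fun l i =>
    if (i : ℕ) = r - 1 then
      if (l : ℕ) = 2 * r - 1 then ((r - 1).factorial : ℝ) / 2 ^ r else 0
    else colMom r i l 1

lemma tendsto_colMom {r i : ℕ} (hi : i < 2 * r) (hir : i ≠ r - 1) (l : ℕ) :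
    Tendsto (colMom r i l) (𝓝[Ioo 0 1] 1) (𝓝 (colMom r i l 1)) := by
  unfold colMom
  split_ifs with h
  · refine tendsto_mom besselPair_I (decayWeight_IK i (2 * r - 1 - i) (by omega)) ?_ l
    have : i + 1 < 2 * r - 1 - i := by omega
    have : ((i + 1 : ℕ) : ℝ) < ((2 * r - 1 - i : ℕ) : ℝ) := by exact_mod_cast this
    push_cast at this; linarith
  · refine tendsto_mom besselPair_K (decayWeight_IK (i - r) (3 * r - 1 - i) (by omega)) ?_ l
    rw [sub_pos]; exact_mod_cast (by omega)

lemma tendsto_det_limMat {r : ℕ} (hr : 2 ≤ r) :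
    Tendsto (fun x : ℝ => (1 - x) ^ r * w r x) (𝓝[Ioo 0 1] 1) (𝓝 (limMat r).det) := by
  obtain ⟨m, rfl⟩ : ∃ m, r = m + 2 := ⟨r - 2, by omega⟩
  set c : Fin (2 * (m + 2)) := ⟨m + 1, by omega⟩ with hc
  have hM : Tendsto (fun x : ℝ => Matrix.of fun l i : Fin (2 * (m + 2)) =>
      (if i = c then (1 - x) ^ (m + 2) else 1) * colMom (m + 2) i l x)
      (𝓝[Ioo 0 1] 1) (𝓝 (limMat (m + 2))) := by
    refine tendsto_pi_nhds.2 fun l => tendsto_pi_nhds.2 fun i => ?_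
    have hcv : i = c ↔ (i : ℕ) = m + 1 := by rw [Fin.ext_iff]
    simp only [Matrix.of_apply, limMat, hcv]
    have e1 : m + 2 - 1 = m + 1 := rfl
    rw [e1]
    by_cases h : (i : ℕ) = m + 1
    · have e2 : 2 * (m + 2) - 1 - (m + 1) = m + 2 := by omega
      simp only [h, if_true, colMom, (by omega : m + 1 < m + 2), e2]
      split_ifs with hl
      · have := tendsto_crit (m + 1)
        rw [hl]
        exact this
      · exact tendsto_crit_zero m l (by have := l.2; omega)
    · simp only [h, if_false, one_mul]
      exact tendsto_colMom i.2 h l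
  refine Tendsto.congr' ?_ ((continuous_id.matrix_det.tendsto (limMat (m + 2))).comp hM)
  filter_upwards [self_mem_nhdsWithin] with x hx
  rw [w_eq_det hx, Function.comp_apply, id]
  have := Matrix.det_mul_row (fun i => if i = c then (1 - x) ^ (m + 2) else 1)
    (Matrix.of fun l i : Fin (2 * (m + 2)) => colMom (m + 2) i l x)
  simp only [Matrix.of_apply] at this
  rw [this]
  simp

/-! ### Evaluation of the limiting determinant -/

/-- The map `k ↦ 2k + 1` for `k < r` and `k ↦ 2(k - r)` for `k ≥ r`, listing the odd rows of a
`2r`-rowed matrix before the even ones. -/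
def oddEven (r : ℕ) (k : Fin (2 * r)) : Fin (2 * r) :=
  if h : (k : ℕ) < r then ⟨2 * k + 1, by omega⟩ else ⟨2 * (k - r), by omega⟩

lemma oddEven_bijective (r : ℕ) : Function.Bijective (oddEven r) := by
  refine Finite.injective_iff_bijective.1 fun a b h => ?_
  unfold oddEven at h
  ext
  split_ifs at h <;> simp only [Fin.mk.injEq] at h <;> omega

/-- The permutation of `Fin (2 * r)` given by `oddEven r`. -/
noncomputable def oddEvenPerm (r : ℕ) : Equiv.Perm (Fin (2 * r)) :=
  Equiv.ofBijective _ (oddEven_bijective r)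

lemma sign_oddEvenPerm (r : ℕ) :
    ((Equiv.Perm.sign (oddEvenPerm r) : ℤ) : ℝ) = (-1) ^ (r * (r + 1) / 2) := by
  have hlt : ∀ i j : Fin (2 * r), i < j →
      (oddEvenPerm r i < oddEvenPerm r j ↔ ¬ ((j : ℕ) - r ≤ i ∧ (i : ℕ) < r ∧ r ≤ (j : ℕ))) := by
    intro i j hij
    have hij' : (i : ℕ) < j := hij
    simp only [oddEvenPerm, Equiv.ofBijective_apply, oddEven, Fin.lt_def]
    split_ifs <;> simp only [] <;> omega
  -- the number of inversions with larger index `j`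
  have hprod : ∀ j : Fin (2 * r), ∏ i ∈ Finset.Iio j,
      (if oddEvenPerm r i < oddEvenPerm r j then (1 : ℤˣ) else -1) =
        (-1) ^ (if (j : ℕ) < r then 0 else 2 * r - (j : ℕ)) := by
    intro j
    have e : ∀ i ∈ Finset.Iio j, (if oddEvenPerm r i < oddEvenPerm r j then (1 : ℤˣ) else -1) =
        if ((j : ℕ) - r ≤ i ∧ (i : ℕ) < r ∧ r ≤ (j : ℕ)) then -1 else 1 := by
      intro i hi
      simp only [hlt i j (Finset.mem_Iio.1 hi), ite_not]
    rw [Finset.prod_congr rfl e, Finset.prod_ite, Finset.prod_const, Finset.prod_const_one, mul_one]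
    congr 1
    have hj := j.2
    split_ifs with h
    · rw [Finset.card_eq_zero, Finset.filter_eq_empty_iff]
      intro i _ h'
      omega
    · have : (Finset.filter (fun i : Fin (2 * r) => (j : ℕ) - r ≤ i ∧ (i : ℕ) < r ∧ r ≤ (j : ℕ))
          (Finset.Iio j)).map Fin.valEmbedding = Finset.Ico ((j : ℕ) - r) r := by
        ext a
        simp only [Finset.mem_map, Finset.mem_filter, Finset.mem_Iio, Fin.valEmbedding_apply,
          Finset.mem_Ico, Fin.lt_def]
        constructor
        · rintro ⟨i, hi, rfl⟩; omega
        · intro ha; exact ⟨⟨a, by omega⟩, by simp only []; omega, rfl⟩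
      rw [← Finset.card_map, this, Nat.card_Ico]
      omega
  rw [Equiv.Perm.sign_eq_prod_prod_Iio, Finset.prod_congr rfl fun j _ => hprod j,
    Finset.prod_pow_eq_pow_sum,
    Fin.sum_univ_eq_sum_range (fun j => if j < r then 0 else 2 * r - j) (2 * r), two_mul,
    Finset.sum_range_add]
  have s1 : ∑ x ∈ Finset.range r, (if x < r then 0 else r + r - x) = 0 :=
    Finset.sum_eq_zero fun x hx => if_pos (Finset.mem_range.1 hx)
  have s2 : ∑ x ∈ Finset.range r, (if r + x < r then 0 else r + r - (r + x)) = r * (r + 1) / 2 := by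
    have : ∑ x ∈ Finset.range r, (if r + x < r then 0 else r + r - (r + x)) =
        ∑ x ∈ Finset.range r, (r - 1 - x + 1) := by
      refine Finset.sum_congr rfl fun x hx => ?_
      have := Finset.mem_range.1 hx
      split_ifs <;> omega
    rw [this, Finset.sum_range_reflect (fun x => x + 1) r, Finset.sum_add_distrib,
      Finset.sum_range_id]
    have h2 : r * (r + 1) = r * (r - 1) + 2 * r := by
      rcases r with _ | r
      · rfl
      · simp; ring
    rw [h2, Nat.add_mul_div_left _ _ two_pos]
    simp
  rw [s1, s2]
  simp

lemma mom_even_one (i q m : ℕ) :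
    mom I0 I1 (fun t => I0 t ^ i * K0 t ^ (q + 1)) (2 * m) 1 =
      mom K0 (fun s => -K1 s) (fun t => I0 t ^ (i + 1) * K0 t ^ q) (2 * m) 1 := by
  unfold mom
  congr 1
  funext t
  simp [bes]
  ring

/-- The Wronskian relation `t (I₁ K₀ + I₀ K₁) = 1` lowers the number of Bessel factors by two. -/
lemma mom_odd_one {i q : ℕ} (h : i + 1 < q) (m : ℕ) :
    mom I0 I1 (fun t => I0 t ^ i * K0 t ^ (q + 1)) (2 * m + 1) 1 -
      mom K0 (fun s => -K1 s) (fun t => I0 t ^ (i + 1) * K0 t ^ q) (2 * m + 1) 1 =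
    ∫ t in Ioi (0:ℝ), I0 t ^ i * K0 t ^ q * t ^ (2 * m) := by
  have h' : ((i : ℝ) + 1) < q := by exact_mod_cast h
  have i1 := integrableOn_integrand besselPair_I (decayWeight_IK i (q + 1) (by omega)) (2 * m + 1)
    one_pos le_rfl (by push_cast; linarith)
  have i2 := integrableOn_integrand besselPair_K (decayWeight_IK (i + 1) q (by omega)) (2 * m + 1)
    one_pos le_rfl (by push_cast; linarith)
  rw [mom, mom, ← integral_sub i1 i2]
  refine setIntegral_congr_fun measurableSet_Ioi fun t ht => ?_
  have hodd : ¬ Even (2 * m + 1) := by simp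
  have hw := bessel_wronskian ht
  simp only [bes, hodd, if_false, one_mul]
  linear_combination (I0 t ^ i * K0 t ^ q * t ^ (2 * m)) * hw

/-- Expansion along a last column which vanishes above its last entry `c`. -/
lemma det_last_column {s : ℕ} (A : Matrix (Fin (s + 1)) (Fin (s + 1)) ℝ) (c : ℝ)
    (hA : ∀ i, A i (Fin.last s) = if i = Fin.last s then c else 0) :
    A.det = c * (A.submatrix Fin.castSucc Fin.castSucc).det := by
  rw [Matrix.det_succ_column A (Fin.last s), Finset.sum_eq_single (Fin.last s)]
  · rw [hA, if_pos rfl, Fin.succAbove_last, ← two_mul, pow_mul]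
    simp
  · intro i _ hi
    rw [hA, if_neg hi]
    simp
  · simp

lemma det_limMat {r : ℕ} (hr : 2 ≤ r) :
    (limMat r).det = (-1 : ℝ) ^ (r * (r + 1) / 2) * (((r - 1).factorial : ℝ) / 2 ^ r) *
      (Nmat (r - 1)).det * (Nmat r).det := by
  obtain ⟨s, rfl⟩ : ∃ s, r = s + 1 := ⟨r - 1, by omega⟩
  rw [Nat.add_sub_cancel]
  set r := s + 1 with hrs
  set c : ℝ := (s.factorial : ℝ) / 2 ^ r with hc
  set e : Fin r ⊕ Fin r ≃ Fin (2 * r) := finSumFinEquiv.trans (finCongr (two_mul r).symm) with he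
  have hel : ∀ i, ((e (Sum.inl i)) : ℕ) = i := by intro i; simp [he]
  have her : ∀ i, ((e (Sum.inr i)) : ℕ) = r + i := by intro i; simp [he, add_comm]
  set M := ((limMat r).submatrix (oddEvenPerm r) id).submatrix e e with hM
  have hdet : M.det = (-1 : ℝ) ^ (r * (r + 1) / 2) * (limMat r).det := by
    rw [hM, Matrix.det_submatrix_equiv_self, Matrix.det_permute, sign_oddEvenPerm]
  have rowl : ∀ i, ((oddEvenPerm r (e (Sum.inl i))) : ℕ) = 2 * i + 1 := by
    intro i
    simp [oddEvenPerm, oddEven, hel]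
  have rowr : ∀ i, ((oddEvenPerm r (e (Sum.inr i))) : ℕ) = 2 * i := by
    intro i
    simp [oddEvenPerm, oddEven, her]
  -- subtracting from the `i`-th column of the first kind the column `i + 1` of the second kind
  set S : Matrix (Fin r) (Fin r) ℝ := Matrix.of fun k i => if (k : ℕ) = i + 1 then 1 else 0 with hS
  have hQS : ∀ (Q : Matrix (Fin r) (Fin r) ℝ) (m : Fin r) (i : Fin s),
      (Q * S) m i.castSucc = Q m i.succ := by
    intro Q m i
    rw [Matrix.mul_apply, Finset.sum_eq_single i.succ]
    · simp [hS]
    · intro k _ hk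
      have : (k : ℕ) ≠ i + 1 := fun h => hk (Fin.ext (by simpa using h))
      simp [hS, this]
    · simp
  have hQS' : ∀ (Q : Matrix (Fin r) (Fin r) ℝ) (m : Fin r), (Q * S) m (Fin.last s) = 0 := by
    intro Q m
    rw [Matrix.mul_apply]
    refine Finset.sum_eq_zero fun k _ => ?_
    have : (k : ℕ) ≠ s + 1 := by have := k.2; omega
    simp [hS, this]
  set A := M.toBlocks₁₁ - M.toBlocks₁₂ * S with hA
  have hI : ∀ (l : Fin (2 * r)) (i : Fin s), limMat r l (e (Sum.inl i.castSucc)) =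
      mom I0 I1 (fun t => I0 t ^ (i : ℕ) * K0 t ^ (2 * s - i + 1)) l 1 := by
    intro l i
    have hi := i.2
    have h1 : (i : ℕ) ≠ r - 1 := by omega
    have h2 : 2 * r - 1 - (i : ℕ) = 2 * s - i + 1 := by omega
    have h3 : (i : ℕ) < r := by omega
    simp [limMat, colMom, hel, h1, h2, h3]
  have hK : ∀ (l : Fin (2 * r)) (j : Fin r), limMat r l (e (Sum.inr j)) =
      mom K0 (fun s => -K1 s) (fun t => I0 t ^ (j : ℕ) * K0 t ^ (2 * r - 1 - j)) l 1 := by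
    intro l j
    have hj := j.2
    have h1 : r + (j : ℕ) ≠ r - 1 := by omega
    have h2 : 3 * r - 1 - (r + (j : ℕ)) = 2 * r - 1 - j := by omega
    simp [limMat, colMom, her, h1, h2]
  have hK' : ∀ (l : Fin (2 * r)) (i : Fin s), limMat r l (e (Sum.inr i.succ)) =
      mom K0 (fun s => -K1 s) (fun t => I0 t ^ ((i : ℕ) + 1) * K0 t ^ (2 * s - i)) l 1 := by
    intro l i
    have hi := i.2
    have h2 : 2 * r - 1 - ((i : ℕ) + 1) = 2 * s - i := by omega
    rw [hK, Fin.val_succ, h2]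
  have hlast : ∀ l : Fin (2 * r), limMat r l (e (Sum.inl (Fin.last s))) =
      if (l : ℕ) = 2 * r - 1 then c else 0 := by
    intro l
    have h1 : s = r - 1 := rfl
    have h2 : ((e (Sum.inl (Fin.last s))) : ℕ) = r - 1 := hel _
    simp only [limMat, Matrix.of_apply, h2, if_true, hc, ← h1]
  have hT : M.toBlocks₂₂ = (Nmat r).transpose := by
    ext m j
    have hj := j.2
    change limMat r _ (e (Sum.inr j)) = IKM _ _ _
    rw [hK, rowr, mom, IKM]
    congr 1
    funext t
    have h2 : 2 * r - (j : ℕ) = 2 * r - 1 - j + 1 := by omega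
    simp [bes, h2]
    ring
  have hR : M.toBlocks₂₁ + -(M.toBlocks₂₂ * S) = 0 := by
    ext m i
    rw [← sub_eq_add_neg, Matrix.sub_apply, Matrix.zero_apply]
    refine Fin.lastCases ?_ (fun i => ?_) i
    · rw [hQS', sub_zero]
      change limMat r _ (e (Sum.inl (Fin.last s))) = 0
      rw [hlast, rowr, if_neg (by omega)]
    · rw [hQS]
      change limMat r _ (e (Sum.inl i.castSucc)) - limMat r _ (e (Sum.inr i.succ)) = 0
      rw [hI, hK', rowr, mom_even_one, sub_self]
  have hAl : ∀ m, A m (Fin.last s) = if m = Fin.last s then c else 0 := by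
    intro m
    rw [hA, Matrix.sub_apply, hQS', sub_zero]
    change limMat r _ (e (Sum.inl (Fin.last s))) = _
    rw [hlast, rowl]
    have : 2 * (m : ℕ) + 1 = 2 * r - 1 ↔ m = Fin.last s := by
      rw [Fin.ext_iff, Fin.val_last]; omega
    simp only [this]
  have hAs : A.submatrix Fin.castSucc Fin.castSucc = (Nmat s).transpose := by
    ext m i
    have hi := i.2
    rw [Matrix.submatrix_apply, hA, Matrix.sub_apply, hQS]
    change limMat r _ (e (Sum.inl i.castSucc)) - limMat r _ (e (Sum.inr i.succ)) = IKM _ _ _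
    rw [hI, hK', rowl, mom_odd_one (by omega), IKM]
    rfl
  have hmul : M * Matrix.fromBlocks 1 0 (-S) 1 =
      Matrix.fromBlocks A M.toBlocks₁₂ 0 (Nmat r).transpose := by
    conv_lhs => rw [← Matrix.fromBlocks_toBlocks M]
    rw [Matrix.fromBlocks_multiply, ← hT, hA]
    simp [sub_eq_add_neg, hR]
  have hfin : M.det = c * (Nmat s).det * (Nmat r).det := by
    have := congrArg Matrix.det hmul
    rw [Matrix.det_mul, Matrix.det_fromBlocks_zero₁₂, Matrix.det_fromBlocks_zero₂₁,
      det_last_column A c hAl, hAs, Matrix.det_transpose, Matrix.det_transpose] at this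
    simpa using this
  have hsq : ((-1 : ℝ) ^ (r * (r + 1) / 2)) * (-1 : ℝ) ^ (r * (r + 1) / 2) = 1 := by
    rw [← mul_pow]; simp
  linear_combination (-1 : ℝ) ^ (r * (r + 1) / 2) * (hfin - hdet) - (limMat r).det * hsq

end

theorem wronskian_even_at_one (r : ℕ) (hr : 2 ≤ r) :
    Filter.Tendsto (fun x : ℝ => (1 - x) ^ r * w r x)
      (nhdsWithin 1 (Set.Ioo (0:ℝ) 1))
      (nhds ((-1 : ℝ) ^ (r * (r + 1) / 2) * (((r - 1).factorial : ℝ) / 2 ^ r) *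
        (Nmat (r - 1)).det * (Nmat r).det)) := by
  rw [← det_limMat hr]
  exact tendsto_det_limMat hr
end
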